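/- arXiv:1904.05887 — 7 statements merged into one kernel-verified Lean document; each statement's English description precedes it below -/
import Mathlib

section
/- Let G be a finite directed graph and let i, j be vertices. The pair (i, j) belongs to the transient category, i.e., the set of reachable time steps ρ(i,j) is nonempty and finite and the set of unreachable time steps σ(i,j) is infinite, if and only if the following two conditions hold: (a) there exists a walk of positive length from i to j; and (b) there is no vertex v such that v lies on some walk from i to j (i.e., there is a walk, possibly of length 0, from i to v and a walk, possibly of length 0, from v to j) and v lies on a closed walk of positive length. Moreover, in this case ρ(i,j) is exactly the set of lengths of the paths from i to j. (Condition (b) is equivalent to π̄_{ij} = ∅ in the paper's notation: no strongly connected component containing a cycle occurs along any path of the condensation digraph from the component of i to the component of j.) -/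
namespace BCNPaper6

variable {V : Type*}

/-- A walk from `i` to `j` encoded as a nonempty list of visited vertices. -/
def IsWalk (E : V → V → Prop) (i j : V) (l : List V) : Prop :=
  l.head? = some i ∧ l.getLast? = some j ∧ l.Chain' E

/-- There is a walk of length exactly `k` from `i` to `j`. -/
def HasWalk (E : V → V → Prop) (k : ℕ) (i j : V) : Prop :=
  ∃ l : List V, IsWalk E i j l ∧ l.length = k + 1

/-- The set of reachable time steps ρ(i,j). -/
def rho (E : V → V → Prop) (i j : V) : Set ℕ :=
  {k | 0 < k ∧ HasWalk E k i j}

/-- The set of unreachable time steps σ(i,j). -/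
def sigmaSet (E : V → V → Prop) (i j : V) : Set ℕ :=
  {k | 0 < k ∧ k ∉ rho E i j}

/-- A path is a walk with pairwise distinct vertices. -/
def IsPath (E : V → V → Prop) (i j : V) (l : List V) : Prop :=
  IsWalk E i j l ∧ l.Nodup

/-!
A closed walk through a vertex between `i` and `j` can be traversed arbitrarily often, which makes
the walks from `i` to `j` arbitrarily long. Conversely, a walk that visits a vertex twice splits
there into three walks, the middle one closed; so if no closed walk is met between `i` and `j`,
every walk from `i` to `j` is a path and its length is bounded by the number of vertices between.
-/

section

variable {E : V → V → Prop} {i j v : V}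

theorem isWalk_append_cons {l₁ l₂ : List V} :
    IsWalk E i j (l₁ ++ v :: l₂) ↔ IsWalk E i v (l₁ ++ [v]) ∧ IsWalk E v j (v :: l₂) := by
  have head_eq : (l₁ ++ v :: l₂).head? = (l₁ ++ [v]).head? := by cases l₁ <;> rfl
  have last_eq : (l₁ ++ v :: l₂).getLast? = (v :: l₂).getLast? :=
    List.getLast?_append_cons l₁ v l₂
  constructor
  · rintro ⟨hi, hj, hchain⟩
    obtain ⟨hchain₁, hchain₂⟩ := List.isChain_split.1 hchain
    exact ⟨⟨head_eq ▸ hi, List.getLast?_concat, hchain₁⟩, rfl, last_eq ▸ hj, hchain₂⟩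
  · rintro ⟨⟨hi, -, hchain₁⟩, -, hj, hchain₂⟩
    exact ⟨head_eq.trans hi, last_eq.trans hj, List.isChain_split.2 ⟨hchain₁, hchain₂⟩⟩

theorem hasWalk_zero_iff : HasWalk E 0 i j ↔ i = j := by
  constructor
  · rintro ⟨l, ⟨hi, hj, -⟩, hl⟩
    obtain ⟨x, rfl⟩ := List.length_eq_one_iff.1 hl
    exact Option.some.inj (hi.symm.trans hj)
  · rintro rfl
    exact ⟨[i], ⟨rfl, rfl, List.isChain_singleton i⟩, rfl⟩

theorem HasWalk.trans {a b : ℕ} (h₁ : HasWalk E a i v) (h₂ : HasWalk E b v j) :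
    HasWalk E (a + b) i j := by
  obtain ⟨l, hl, hla⟩ := h₁
  obtain ⟨l', hl', hlb⟩ := h₂
  obtain ⟨l₁, rfl⟩ := List.getLast?_eq_some_iff.1 hl.2.1
  obtain ⟨l₂, rfl⟩ := List.head?_eq_some_iff.1 hl'.1
  refine ⟨l₁ ++ v :: l₂, isWalk_append_cons.2 ⟨hl, hl'⟩, ?_⟩
  simp only [List.length_append, List.length_cons, List.length_nil] at hla hlb ⊢
  omega

theorem HasWalk.iterate {c : ℕ} (h : HasWalk E c v v) (n : ℕ) : HasWalk E (n * c) v v := by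
  induction n with
  | zero => rw [Nat.zero_mul, hasWalk_zero_iff]
  | succ n ih => rw [Nat.succ_mul]; exact ih.trans h

/-- The vertices between `i` and `j`: those lying on some walk, possibly of length `0`,
from `i` to `j`. -/
def walkInterval (E : V → V → Prop) (i j : V) : Set V :=
  {v | (∃ a, HasWalk E a i v) ∧ ∃ b, HasWalk E b v j}

/-- Some vertex between `i` and `j` lies on a closed walk of positive length, i.e. `π̄_{ij} ≠ ∅` in
the paper's notation. -/
def HasCycleBetween (E : V → V → Prop) (i j : V) : Prop :=
  ∃ v, (∃ a, HasWalk E a i v) ∧ (∃ b, HasWalk E b v j) ∧ ∃ c, 0 < c ∧ HasWalk E c v v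

theorem IsWalk.mem_walkInterval {l : List V} (h : IsWalk E i j l) (hv : v ∈ l) :
    v ∈ walkInterval E i j := by
  obtain ⟨l₁, l₂, rfl⟩ := List.append_of_mem hv
  obtain ⟨h₁, h₂⟩ := isWalk_append_cons.1 h
  exact ⟨⟨l₁.length, _, h₁, List.length_append⟩, l₂.length, _, h₂, rfl⟩

theorem IsWalk.nodup_of_not_hasCycleBetween {l : List V} (h : IsWalk E i j l)
    (hcyc : ¬ HasCycleBetween E i j) : l.Nodup := by
  refine List.nodup_iff_sublist.2 fun v hdup => hcyc ?_
  obtain ⟨r₁, r₂, rfl, hv₁, hv₂⟩ := List.cons_sublist_iff.1 hdup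
  obtain ⟨hiv, hvj⟩ := h.mem_walkInterval (List.mem_append_left r₂ hv₁)
  obtain ⟨s₁, t₁, rfl⟩ := List.append_of_mem hv₁
  obtain ⟨s₂, t₂, rfl⟩ := List.append_of_mem (List.singleton_sublist.1 hv₂)
  have tail : IsWalk E v j ((v :: (t₁ ++ s₂)) ++ v :: t₂) := by
    rw [List.append_assoc, List.cons_append, isWalk_append_cons] at h
    simpa only [List.cons_append, List.append_assoc] using h.2
  have loop : IsWalk E v v ((v :: (t₁ ++ s₂)) ++ [v]) := (isWalk_append_cons.1 tail).1
  exact ⟨v, hiv, hvj, (t₁ ++ s₂).length + 1, Nat.succ_pos _, _, loop, List.length_append⟩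

theorem HasCycleBetween.rho_infinite (h : HasCycleBetween E i j) : (rho E i j).Infinite := by
  obtain ⟨v, ⟨a, ha⟩, ⟨b, hb⟩, c, hc, hv⟩ := h
  refine Set.infinite_of_forall_exists_gt fun N => ?_
  have hlong : N + 1 ≤ (N + 1) * c := Nat.le_mul_of_pos_right _ hc
  exact ⟨a + (N + 1) * c + b, ⟨by omega, (ha.trans (hv.iterate (N + 1))).trans hb⟩, by omega⟩

theorem rho_finite_of_not_hasCycleBetween (hfin : (walkInterval E i j).Finite)
    (hcyc : ¬ HasCycleBetween E i j) : (rho E i j).Finite := by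
  refine (Set.finite_Iio hfin.toFinset.toList.length).subset ?_
  rintro k ⟨-, l, hl, hk⟩
  have hsub : l ⊆ hfin.toFinset.toList := fun v hv => by
    simpa only [Finset.mem_toList, Set.Finite.mem_toFinset] using hl.mem_walkInterval hv
  have hle := ((hl.nodup_of_not_hasCycleBetween hcyc).subperm hsub).length_le
  exact Nat.lt_of_succ_le (hk.symm.trans_le hle)

theorem sigmaSet_infinite_of_rho_finite (h : (rho E i j).Finite) : (sigmaSet E i j).Infinite :=
  (Set.Ioi_infinite 0).sdiff h

theorem rho_eq_setOf_isPath_length (hne : (rho E i j).Nonempty)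
    (hcyc : ¬ HasCycleBetween E i j) :
    rho E i j = {k | ∃ l, IsPath E i j l ∧ l.length = k + 1} := by
  ext k
  constructor
  · rintro ⟨-, l, hl, hk⟩
    exact ⟨l, ⟨hl, hl.nodup_of_not_hasCycleBetween hcyc⟩, hk⟩
  · rintro ⟨l, ⟨hl, -⟩, hk⟩
    refine ⟨Nat.pos_of_ne_zero ?_, l, hl, hk⟩
    -- A path of length `0` means `i = j`, and then any element of `rho` is a closed walk at `i`.
    rintro rfl
    obtain rfl : i = j := hasWalk_zero_iff.1 ⟨l, hl, hk⟩
    have hrefl : HasWalk E 0 i i := hasWalk_zero_iff.2 rfl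
    exact hcyc ⟨i, ⟨0, hrefl⟩, ⟨0, hrefl⟩, hne⟩

end

theorem stmt6_general (E : V → V → Prop) (i j : V) (hfin : (walkInterval E i j).Finite) :
    (((rho E i j).Nonempty ∧ (rho E i j).Finite ∧ (sigmaSet E i j).Infinite) ↔
      ((∃ k : ℕ, 0 < k ∧ HasWalk E k i j) ∧ ¬ HasCycleBetween E i j)) ∧
    (((rho E i j).Nonempty ∧ (rho E i j).Finite ∧ (sigmaSet E i j).Infinite) →
      rho E i j = {k : ℕ | ∃ l : List V, IsPath E i j l ∧ l.length = k + 1}) := by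
  have acyclic_of_finite (h : (rho E i j).Finite) : ¬ HasCycleBetween E i j :=
    fun hcyc => hcyc.rho_infinite h
  refine ⟨⟨fun ⟨hne, hρ, _⟩ => ⟨hne, acyclic_of_finite hρ⟩, fun ⟨hne, hcyc⟩ => ?_⟩,
    fun ⟨hne, hρ, _⟩ => rho_eq_setOf_isPath_length hne (acyclic_of_finite hρ)⟩
  have hρ := rho_finite_of_not_hasCycleBetween hfin hcyc
  exact ⟨hne, hρ, sigmaSet_infinite_of_rho_finite hρ⟩

theorem stmt6 [Fintype V] (E : V → V → Prop) (i j : V) :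
    (((rho E i j).Nonempty ∧ (rho E i j).Finite ∧ (sigmaSet E i j).Infinite) ↔
      ((∃ k : ℕ, 0 < k ∧ HasWalk E k i j) ∧
        ¬ ∃ v : V, (∃ a : ℕ, HasWalk E a i v) ∧ (∃ b : ℕ, HasWalk E b v j) ∧
            (∃ c : ℕ, 0 < c ∧ HasWalk E c v v))) ∧
    (((rho E i j).Nonempty ∧ (rho E i j).Finite ∧ (sigmaSet E i j).Infinite) →
      rho E i j = {k : ℕ | ∃ l : List V, IsPath E i j l ∧ l.length = k + 1}) :=
  stmt6_general E i j (Set.toFinite _)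

end BCNPaper6
end

section
/- With the condensation notation below, for any ordered pair of vertices (i, j) of a finite directed graph G, the pair (i, j) belongs to the primitive category — i.e., the set of reachable time steps ρ(i,j) is infinite and the set of unreachable time steps σ(i,j) is finite — if and only if π̄_{ij} = {0, 1, ..., η̄_{ij} − 1} (that is, π̄_{ij} is a complete residue system modulo η̄_{ij}). -/
namespace BCNPaper7

variable {V : Type*}

/-- A walk from `i` to `j` encoded as a nonempty list of visited vertices. -/
def IsWalk (E : V → V → Prop) (i j : V) (l : List V) : Prop :=
  l.head? = some i ∧ l.getLast? = some j ∧ l.Chain' E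

/-- There is a walk of length exactly `k` from `i` to `j`. -/
def HasWalk (E : V → V → Prop) (k : ℕ) (i j : V) : Prop :=
  ∃ l : List V, IsWalk E i j l ∧ l.length = k + 1

/-- The set of reachable time steps ρ(i,j). -/
def rho (E : V → V → Prop) (i j : V) : Set ℕ :=
  {k | 0 < k ∧ HasWalk E k i j}

/-- The set of unreachable time steps σ(i,j). -/
def sigmaSet (E : V → V → Prop) (i j : V) : Set ℕ :=
  {k | 0 < k ∧ k ∉ rho E i j}

/-- A path is a walk with pairwise distinct vertices. -/
def IsPath (E : V → V → Prop) (i j : V) (l : List V) : Prop :=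
  IsWalk E i j l ∧ l.Nodup

/-- The strongly connected component of a vertex `i`. -/
def sccOf (E : V → V → Prop) (i : V) : Set V :=
  {v | v = i ∨ ((∃ k : ℕ, 0 < k ∧ HasWalk E k i v) ∧ (∃ k : ℕ, 0 < k ∧ HasWalk E k v i))}

/-- `X` is a strongly connected component of the graph. -/
def IsSCC (E : V → V → Prop) (X : Set V) : Prop :=
  ∃ i : V, X = sccOf E i

/-- There is a cycle (closed walk of positive length `k` with no repeated vertices
other than its endpoints) all of whose vertices lie in `X`. -/
def IsCycleIn (E : V → V → Prop) (X : Set V) (k : ℕ) : Prop :=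
  ∃ v : V, ∃ l : List V, IsWalk E v v l ∧ l.length = k + 1 ∧ 0 < k ∧
    l.dropLast.Nodup ∧ ∀ u ∈ l, u ∈ X

/-- `g` is the greatest common divisor of the set `S` of natural numbers
(`g = 0` if `S` is empty). -/
def IsGCDSet (S : Set ℕ) (g : ℕ) : Prop :=
  (∀ s ∈ S, g ∣ s) ∧ ∀ d : ℕ, (∀ s ∈ S, d ∣ s) → d ∣ g

/-- `m` is the least common multiple of the set `S` of natural numbers
(`m = 1` if `S` is empty). -/
def IsLCMSet (S : Set ℕ) (m : ℕ) : Prop :=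
  (∀ s ∈ S, s ∣ m) ∧ ∀ c : ℕ, (∀ s ∈ S, s ∣ c) → m ∣ c

/-- A type-2 SCC: an SCC containing a cycle of the graph. -/
def IsT2 (E : V → V → Prop) (X : Set V) : Prop :=
  IsSCC E X ∧ ∃ k : ℕ, IsCycleIn E X k

/-- `η` is the index of imprimitivity of the T2SCC `X`: the gcd of the lengths of
the cycles of the graph contained in `X`. -/
def ImprimIndex (E : V → V → Prop) (X : Set V) (η : ℕ) : Prop :=
  IsGCDSet {k : ℕ | IsCycleIn E X k} η

/-- The edge relation of the condensation digraph. -/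
def CondE (E : V → V → Prop) (X Y : Set V) : Prop :=
  X ≠ Y ∧ ∃ u ∈ X, ∃ v ∈ Y, E u v

/-- `L` is a path in the condensation digraph from the SCC of `i` to the SCC of `j`. -/
def IsCondPath (E : V → V → Prop) (i j : V) (L : List (Set V)) : Prop :=
  L.head? = some (sccOf E i) ∧ L.getLast? = some (sccOf E j) ∧
  L.Chain' (CondE E) ∧ L.Nodup ∧ ∀ X ∈ L, IsSCC E X

/-- Remove consecutive repetitions from a list. -/
noncomputable def collapse {α : Type*} (l : List α) : List α :=
  letI : DecidableRel (α := α) (· ≠ ·) := Classical.decRel _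
  l.destutter (· ≠ ·)

/-- A walk `l` in `G` belongs to the class of the condensation path `L` if the
sequence of SCCs of its vertices, with consecutive repetitions removed, is `L`. -/
def InClass (E : V → V → Prop) (L : List (Set V)) (l : List V) : Prop :=
  collapse (l.map (sccOf E)) = L

/-! Fix a condensation path with index `η`. The cycles of a component and the closed walks based at
any one of its vertices have the same common divisors, so `η` is also the gcd of the lengths of the
closed walks based at the vertices of any walk in the class of the path. Removing closed subwalks
therefore reduces a walk to a path of the same class without changing its length modulo `η`, and
inserting closed walks lengthens a path by every sufficiently large multiple of `η`. When `η = 0`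
there is nothing to remove or insert, and all walks of the class have the same length. Hence, for
large `n`, there is a walk of length `n` if and only if, for some class with `η ≠ 0`, `n` is
congruent modulo `η` to the length of a path of the class. This condition on `n` has period `η̄`,
so it holds eventually if and only if it holds for all `n < η̄`. -/

open Filter Relation

section Arithmetic

theorem isGCDSet_iff_eq_setGcd {S : Set ℕ} {g : ℕ} : IsGCDSet S g ↔ g = Nat.setGcd S := by
  constructor
  · rintro ⟨hdvd, hgreatest⟩
    exact Nat.dvd_antisymm (Nat.dvd_setGcd_iff.2 hdvd)
      (hgreatest _ fun _ hs => Nat.setGcd_dvd_of_mem hs)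
  · rintro rfl
    exact ⟨fun _ hs => Nat.setGcd_dvd_of_mem hs, fun _ hd => Nat.dvd_setGcd_iff.2 hd⟩

theorem IsGCDSet.dvd_iff {S : Set ℕ} {g d : ℕ} (h : IsGCDSet S g) :
    d ∣ g ↔ ∀ s ∈ S, d ∣ s := by
  rw [isGCDSet_iff_eq_setGcd.1 h, Nat.dvd_setGcd_iff]

theorem IsLCMSet.pos {S : Set ℕ} {m : ℕ} (h : IsLCMSet S m) (hS : S.Finite) (h0 : 0 ∉ S) :
    0 < m := by
  have hdvd : m ∣ ∏ s ∈ hS.toFinset, s :=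
    h.2 _ fun s hs => Finset.dvd_prod_of_mem _ (hS.mem_toFinset.2 hs)
  refine Nat.pos_of_dvd_of_pos hdvd (Finset.prod_pos fun s hs => Nat.pos_of_ne_zero ?_)
  rintro rfl
  exact h0 (hS.mem_toFinset.1 hs)

theorem eventually_atTop_iff_forall_of_periodic {p : ℕ → Prop} {m : ℕ}
    (hp : Function.Periodic p m) (hm : 0 < m) : (∀ᶠ n in atTop, p n) ↔ ∀ n, p n := by
  refine ⟨fun h n => ?_, Eventually.of_forall⟩
  obtain ⟨N, hN⟩ := eventually_atTop.1 h
  rw [← hp.nat_mul N n]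
  exact hN _ (by nlinarith)

theorem forall_iff_forall_lt_of_periodic {p : ℕ → Prop} {m : ℕ}
    (hp : Function.Periodic p m) (hm : 0 < m) : (∀ n, p n) ↔ ∀ n < m, p n :=
  ⟨fun h n _ => h n, fun h n => hp.map_mod_nat n ▸ h _ (Nat.mod_lt n hm)⟩

theorem periodic_exists_mod_mem {ι : Type*} {η : ι → ℕ} {m : ℕ} (A : ι → Set ℕ)
    (hm : ∀ k, η k ≠ 0 → η k ∣ m) :
    Function.Periodic (fun n => ∃ k, η k ≠ 0 ∧ n % η k ∈ A k) m := by
  intro n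
  refine propext (exists_congr fun k => and_congr_right fun h0 => ?_)
  obtain ⟨q, hq⟩ := hm k h0
  rw [hq, Nat.add_mul_mod_self_left]

/-- The set `π̃` of the paper: the lifts to `{0, …, m - 1}` of a set `A` of residues modulo `η`,
where `η` divides `m`. As in the paper, modulus `η = 0` (no T2SCC on the path) gives `∅`. -/
def residueLift (A : Set ℕ) (η m : ℕ) : Set ℕ :=
  if η = 0 then ∅ else {c | ∃ a ∈ A, ∃ b : ℕ, b ≤ m / η - 1 ∧ c = a + b * η}

theorem mem_residueLift_iff {A : Set ℕ} {η m c : ℕ} (hm : 0 < m) (hη : η ≠ 0 → η ∣ m)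
    (hA : η ≠ 0 → ∀ a ∈ A, a < η) :
    c ∈ residueLift A η m ↔ c < m ∧ η ≠ 0 ∧ c % η ∈ A := by
  by_cases h0 : η = 0
  · simp [residueLift, h0]
  obtain ⟨q, rfl⟩ := hη h0
  have hη0 := Nat.pos_of_ne_zero h0
  have hq : 0 < q := Nat.pos_of_mul_pos_left hm
  simp only [residueLift, h0, if_false, Set.mem_ofPred_eq, ne_eq, not_false_eq_true, true_and,
    Nat.mul_div_cancel_left q hη0]
  constructor
  · rintro ⟨a, ha, b, hb, rfl⟩
    have hlt := hA h0 a ha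
    refine ⟨?_, by rwa [Nat.add_mul_mod_self_right, Nat.mod_eq_of_lt hlt]⟩
    calc a + b * η < (b + 1) * η := by linarith
      _ ≤ q * η := Nat.mul_le_mul_right η (by omega)
      _ = η * q := mul_comm q η
  · rintro ⟨hc, ha⟩
    exact ⟨c % η, ha, c / η, Nat.le_pred_of_lt (Nat.div_lt_of_lt_mul hc),
      (Nat.mod_add_div' c η).symm⟩

end Arithmetic

section Lists

variable {α : Type*}

theorem exists_eq_append_of_not_nodup {l : List α} (h : ¬ l.Nodup) :
    ∃ s a m t, l = s ++ a :: (m ++ a :: t) := by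
  obtain ⟨a, ha⟩ := List.exists_duplicate_iff_not_nodup.2 h
  obtain ⟨r₁, r₂, rfl, ha₁, ha₂⟩ := List.cons_sublist_iff.1 (List.duplicate_iff_sublist.1 ha)
  obtain ⟨s, m, rfl⟩ := List.append_of_mem ha₁
  obtain ⟨m', t, rfl⟩ := List.append_of_mem (List.singleton_sublist.1 ha₂)
  exact ⟨s, a, m ++ m', t, by simp⟩

theorem collapse_cons_cons_self (a : α) (l : List α) :
    collapse (a :: a :: l) = collapse (a :: l) := by
  simp [collapse, List.destutter_cons']

theorem collapse_cons_cons_of_ne {a b : α} (h : a ≠ b) (l : List α) :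
    collapse (a :: b :: l) = a :: collapse (b :: l) := by
  simp [collapse, List.destutter_cons', h]

theorem collapse_eq_self {l : List α} (h : l.IsChain (· ≠ ·)) : collapse l = l :=
  letI := Classical.decRel (α := α) (· ≠ ·)
  List.destutter_of_isChain _ l h

theorem mem_collapse {x : α} : ∀ {l : List α}, x ∈ collapse l ↔ x ∈ l
  | [] | [_] => Iff.rfl
  | a :: b :: l => by
    rcases eq_or_ne a b with rfl | h
    · simp [collapse_cons_cons_self, mem_collapse (l := a :: l)]
    · simp [collapse_cons_cons_of_ne h, mem_collapse (l := b :: l)]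

theorem head?_collapse : ∀ l : List α, (collapse l).head? = l.head?
  | [] | [_] => rfl
  | a :: b :: l => by
    rcases eq_or_ne a b with rfl | h
    · simpa [collapse_cons_cons_self] using head?_collapse (a :: l)
    · simp [collapse_cons_cons_of_ne h]

theorem getLast?_collapse : ∀ l : List α, (collapse l).getLast? = l.getLast?
  | [] | [_] => rfl
  | a :: b :: l => by
    rcases eq_or_ne a b with rfl | h
    · simpa [collapse_cons_cons_self] using getLast?_collapse (a :: l)
    · simp [collapse_cons_cons_of_ne h, List.getLast?_cons, getLast?_collapse (b :: l)]

theorem isChain_collapse {R : α → α → Prop} :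
    ∀ {l : List α}, l.IsChain R → (collapse l).IsChain fun x y => x ≠ y ∧ R x y
  | [], _ | [_], _ => by simp [collapse]
  | a :: b :: l, h => by
    rw [List.isChain_cons_cons] at h
    rcases eq_or_ne a b with rfl | hne
    · simpa only [collapse_cons_cons_self] using isChain_collapse h.2
    · rw [collapse_cons_cons_of_ne hne]
      refine (isChain_collapse h.2).cons fun y hy => ?_
      obtain rfl : b = y := by simpa [head?_collapse] using hy
      exact ⟨hne, h.1⟩

theorem nodup_collapse {r : α → α → Prop} [Std.Antisymm r] {l : List α} (h : l.Pairwise r) :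
    (collapse l).Nodup := by
  classical
  have hdedup : collapse l = l.dedup := by
    rw [← h.destutter_eq_dedup, collapse]
    congr!
  exact hdedup ▸ l.nodup_dedup

theorem collapse_append_cons_congr {a : α} {l l' : List α}
    (h : collapse (a :: l) = collapse (a :: l')) :
    ∀ s : List α, collapse (s ++ a :: l) = collapse (s ++ a :: l')
  | [] => h
  | [x] => by
    rcases eq_or_ne x a with rfl | hx
    · simpa [collapse_cons_cons_self] using h
    · simpa [collapse_cons_cons_of_ne hx] using h
  | x :: y :: s => by
    have ih := collapse_append_cons_congr h (y :: s)
    rcases eq_or_ne x y with rfl | hx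
    · simpa [collapse_cons_cons_self] using ih
    · simpa [collapse_cons_cons_of_ne hx] using ih

theorem collapse_cons_append_of_forall_eq {a : α} {m : List α} (t : List α)
    (hm : ∀ x ∈ m, x = a) : collapse (a :: (m ++ a :: t)) = collapse (a :: t) := by
  rw [List.eq_replicate_of_mem hm]
  induction m.length with
  | zero => exact collapse_cons_cons_self a t
  | succ n ih => rwa [List.replicate_succ, List.cons_append, collapse_cons_cons_self]

end Lists

section Walks

variable {E : V → V → Prop} {i j u v a : V} {l s m t : List V} {n k : ℕ}

theorem isWalk_append_cons_iff :
    IsWalk E i j (s ++ a :: t) ↔ IsWalk E i a (s ++ [a]) ∧ IsWalk E a j (a :: t) := by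
  have hhead : (s ++ a :: t).head? = (s ++ [a]).head? := by cases s <;> rfl
  have hchain : (s ++ a :: t).IsChain E ↔ (s ++ [a]).IsChain E ∧ (a :: t).IsChain E :=
    List.isChain_split
  have hlast : (s ++ a :: t).getLast? = (a :: t).getLast? :=
    List.getLast?_append_of_ne_nil s (List.cons_ne_nil a t)
  change _ ∧ _ ∧ List.IsChain E _ ↔ (_ ∧ _ ∧ List.IsChain E _) ∧ (_ ∧ _ ∧ List.IsChain E _)
  rw [hhead, hchain, hlast]
  simp only [List.getLast?_concat, List.head?_cons, true_and]
  tauto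

theorem isWalk_append_loop_iff :
    IsWalk E i j (s ++ a :: (m ++ a :: t)) ↔
      IsWalk E a a (a :: m ++ [a]) ∧ IsWalk E i j (s ++ a :: t) := by
  rw [isWalk_append_cons_iff, ← List.cons_append, isWalk_append_cons_iff (s := a :: m),
    isWalk_append_cons_iff (t := t)]
  tauto

theorem IsWalk.append (h₁ : IsWalk E i v l) (h₂ : IsWalk E v j (v :: t)) :
    IsWalk E i j (l ++ t) := by
  obtain ⟨s, rfl⟩ := List.getLast?_eq_some_iff.1 h₁.2.1
  simpa using isWalk_append_cons_iff.2 ⟨h₁, h₂⟩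

theorem IsWalk.length_pos (h : IsWalk E i j l) : 0 < l.length := by
  obtain ⟨t, rfl⟩ := List.head?_eq_some_iff.1 h.1
  simp

theorem IsWalk.hasWalk (h : IsWalk E i j l) : HasWalk E (l.length - 1) i j :=
  ⟨l, h, (Nat.sub_add_cancel h.length_pos).symm⟩

theorem HasWalk.refl (E : V → V → Prop) (i : V) : HasWalk E 0 i i :=
  ⟨[i], ⟨rfl, rfl, List.isChain_singleton i⟩, rfl⟩

theorem HasWalk.of_edge (h : E i j) : HasWalk E 1 i j :=
  ⟨[i, j], ⟨rfl, rfl, List.isChain_pair.2 h⟩, rfl⟩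

theorem HasWalk.trans (h₁ : HasWalk E n i v) (h₂ : HasWalk E k v j) : HasWalk E (n + k) i j := by
  obtain ⟨l, hl, hlen⟩ := h₁
  obtain ⟨l', hl', hlen'⟩ := h₂
  obtain ⟨t, rfl⟩ := List.head?_eq_some_iff.1 hl'.1
  refine ⟨l ++ t, hl.append hl', ?_⟩
  simp only [List.length_append, List.length_cons] at hlen' ⊢
  omega

theorem exists_hasWalk_iff : (∃ n, HasWalk E n u v) ↔ ReflTransGen E u v := by
  constructor
  · rintro ⟨n, l, ⟨hhead, hlast, hchain⟩, -⟩
    obtain ⟨t, rfl⟩ := List.head?_eq_some_iff.1 hhead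
    exact List.relationReflTransGen_of_exists_isChain_cons t hchain
      (List.getLast_of_getLast?_eq_some hlast)
  · intro h
    induction h with
    | refl => exact ⟨0, .refl E u⟩
    | tail _ hedge ih =>
      obtain ⟨n, hn⟩ := ih
      exact ⟨n + 1, hn.trans (.of_edge hedge)⟩

theorem HasWalk.reflTransGen (h : HasWalk E n u v) : ReflTransGen E u v :=
  exists_hasWalk_iff.1 ⟨n, h⟩

theorem IsWalk.reflTransGen_of_mem (h : IsWalk E i j l) (hv : v ∈ l) :
    ReflTransGen E i v ∧ ReflTransGen E v j := by
  obtain ⟨s, t, rfl⟩ := List.append_of_mem hv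
  obtain ⟨h₁, h₂⟩ := isWalk_append_cons_iff.1 h
  exact ⟨h₁.hasWalk.reflTransGen, h₂.hasWalk.reflTransGen⟩

theorem mem_sccOf_iff :
    v ∈ sccOf E u ↔ ReflTransGen E u v ∧ ReflTransGen E v u := by
  constructor
  · rintro (rfl | ⟨⟨n, -, huv⟩, ⟨k, -, hvu⟩⟩)
    · exact ⟨.refl, .refl⟩
    · exact ⟨huv.reflTransGen, hvu.reflTransGen⟩
  · rintro ⟨huv, hvu⟩
    have pos_of_ne {x y : V} (hxy : x ≠ y) (h : ReflTransGen E x y) :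
        ∃ k, 0 < k ∧ HasWalk E k x y := by
      obtain ⟨k, l, hl, hlen⟩ := exists_hasWalk_iff.2 h
      refine ⟨k, Nat.pos_of_ne_zero ?_, l, hl, hlen⟩
      rintro rfl
      obtain ⟨z, rfl⟩ := List.length_eq_one_iff.1 hlen
      exact hxy ((Option.some.inj hl.1).symm.trans (Option.some.inj hl.2.1))
    by_cases hv : v = u
    · exact Or.inl hv
    · exact Or.inr ⟨pos_of_ne (Ne.symm hv) huv, pos_of_ne hv hvu⟩

theorem mem_sccOf_self (E : V → V → Prop) (v : V) : v ∈ sccOf E v := Or.inl rfl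

theorem sccOf_eq_iff :
    sccOf E u = sccOf E v ↔ ReflTransGen E u v ∧ ReflTransGen E v u := by
  constructor
  · intro h
    exact mem_sccOf_iff.1 (h ▸ mem_sccOf_self E v)
  · rintro ⟨huv, hvu⟩
    ext x
    simp only [mem_sccOf_iff]
    exact ⟨fun h => ⟨hvu.trans h.1, h.2.trans huv⟩, fun h => ⟨huv.trans h.1, h.2.trans hvu⟩⟩

theorem IsWalk.sccOf_eq_of_mem (h : IsWalk E u u l) (hv : v ∈ l) : sccOf E v = sccOf E u :=
  sccOf_eq_iff.2 (h.reflTransGen_of_mem hv).symm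

theorem IsWalk.isCondPath_collapse (h : IsWalk E i j l) :
    IsCondPath E i j (collapse (l.map (sccOf E))) := by
  refine ⟨?_, ?_, ?_, ?_, ?_⟩
  · simp [head?_collapse, h.1]
  · simp [getLast?_collapse, h.2.1]
  · refine isChain_collapse (List.isChain_map_of_isChain _ (fun u v huv => ?_) h.2.2)
    exact ⟨u, mem_sccOf_self E u, v, mem_sccOf_self E v, huv⟩
  · let R (X Y : Set V) : Prop :=
      ∃ u v, X = sccOf E u ∧ Y = sccOf E v ∧ ReflTransGen E u v
    have : Std.Antisymm R := by
      refine ⟨?_⟩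
      rintro _ _ ⟨u, v, rfl, rfl, huv⟩ ⟨v', u', hv, hu, hvu⟩
      exact sccOf_eq_iff.2
        ⟨huv, (sccOf_eq_iff.1 hv).1.trans (hvu.trans (sccOf_eq_iff.1 hu).2)⟩
    have hreach : l.Pairwise (ReflTransGen E) :=
      (List.IsChain.imp (fun _ _ => ReflTransGen.single) h.2.2).pairwise
    exact nodup_collapse (r := R) (hreach.map _ fun u v huv => ⟨u, v, rfl, rfl, huv⟩)
  · intro X hX
    obtain ⟨v, -, rfl⟩ := List.mem_map.1 (mem_collapse.1 hX)
    exact ⟨v, rfl⟩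

end Walks

section Imprimitivity

variable {E : V → V → Prop} {i j v : V} {l : List V} {d η : ℕ}

-- A closed walk that is not a cycle splits at a repeated vertex into two shorter closed walks,
-- both based in the same component.
theorem dvd_of_hasWalk_self {X : Set V} (hd : ∀ c, IsCycleIn E X c → d ∣ c) {n : ℕ}
    (hv : sccOf E v = X) (h : HasWalk E n v v) : d ∣ n := by
  induction n using Nat.strong_induction_on generalizing v with
  | _ n ih =>
  obtain ⟨l, hl, hlen⟩ := h
  obtain rfl | hn := n.eq_zero_or_pos
  · exact dvd_zero d
  by_cases hnodup : l.dropLast.Nodup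
  · refine hd n ⟨v, l, hl, hlen, hn, hnodup, fun u hu => ?_⟩
    rw [← hv, ← hl.sccOf_eq_of_mem hu]
    exact mem_sccOf_self E u
  · obtain ⟨r, rfl⟩ := List.getLast?_eq_some_iff.1 hl.2.1
    rw [List.dropLast_concat] at hnodup
    obtain ⟨s, a, m, t, rfl⟩ := exists_eq_append_of_not_nodup hnodup
    have ha : sccOf E a = X := hv ▸ hl.sccOf_eq_of_mem (by simp)
    simp only [List.append_assoc, List.cons_append] at hl
    obtain ⟨hinner, houter⟩ := isWalk_append_loop_iff.1 hl
    simp only [List.length_append, List.length_cons, List.length_nil] at hlen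
    have hdm : d ∣ m.length + 1 := ih _ (by omega) ha ⟨_, hinner, by simp⟩
    have hdst : d ∣ s.length + t.length + 1 :=
      ih _ (by omega) hv ⟨_, houter, by simp [add_assoc]⟩
    obtain rfl : n = m.length + 1 + (s.length + t.length + 1) := by omega
    exact dvd_add hdm hdst

theorem forall_hasWalk_self_dvd_iff :
    (∀ n, HasWalk E n v v → d ∣ n) ↔ ∀ c, IsCycleIn E (sccOf E v) c → d ∣ c := by
  refine ⟨fun h c hc => ?_, fun h _ hn => dvd_of_hasWalk_self h rfl hn⟩
  obtain ⟨u, l, hl, hlen, -, -, hX⟩ := hc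
  obtain ⟨hvu, huv⟩ := mem_sccOf_iff.1 (hX u (List.mem_of_mem_head? hl.1))
  obtain ⟨x, hx⟩ := exists_hasWalk_iff.2 hvu
  obtain ⟨y, hy⟩ := exists_hasWalk_iff.2 huv
  have hcycle : HasWalk E c u u := ⟨l, hl, hlen⟩
  have hwithout : d ∣ x + y := h _ (hx.trans hy)
  have hwith : d ∣ x + y + c := by
    simpa only [add_assoc, add_comm c y] using h _ (hx.trans (hcycle.trans hy))
  exact (Nat.dvd_add_right hwithout).1 hwith

/-- `η` is the gcd `η_{ij}^k` of the indices of imprimitivity of the T2SCCs on a condensation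
path `L`; it is `0` if there are none. -/
def ClassIndex (E : V → V → Prop) (L : List (Set V)) (η : ℕ) : Prop :=
  IsGCDSet {m : ℕ | ∃ X ∈ L, IsT2 E X ∧ ImprimIndex E X m} η

theorem ClassIndex.dvd_iff {L : List (Set V)} (h : ClassIndex E L η) (hL : ∀ X ∈ L, IsSCC E X) :
    d ∣ η ↔ ∀ X ∈ L, ∀ c, IsCycleIn E X c → d ∣ c := by
  rw [IsGCDSet.dvd_iff h]
  constructor
  · intro hd X hX c hc
    have hindex : ImprimIndex E X _ := isGCDSet_iff_eq_setGcd.2 rfl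
    exact (hindex.dvd_iff.1 (hd _ ⟨X, hX, ⟨hL X hX, c, hc⟩, hindex⟩)) c hc
  · rintro hd m ⟨X, hX, -, hm⟩
    exact hm.dvd_iff.2 (hd X hX)

theorem ClassIndex.isGCDSet_hasWalk_self {L : List (Set V)} (h : ClassIndex E L η)
    (hl : InClass E L l) : IsGCDSet {n | ∃ v ∈ l, HasWalk E n v v} η := by
  have hL : ∀ X, X ∈ L ↔ ∃ v ∈ l, sccOf E v = X := by
    intro X
    rw [← hl, mem_collapse, List.mem_map]
  have hSCC : ∀ X ∈ L, IsSCC E X := by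
    intro X hX
    obtain ⟨v, -, rfl⟩ := (hL X).1 hX
    exact ⟨v, rfl⟩
  have hdvd (d : ℕ) : d ∣ η ↔ ∀ v ∈ l, ∀ n, HasWalk E n v v → d ∣ n := by
    simp only [h.dvd_iff hSCC, hL, forall_exists_index, and_imp, forall_apply_eq_imp_iff₂,
      forall_hasWalk_self_dvd_iff]
  refine ⟨?_, fun d hd => (hdvd d).2 fun v hv n hn => hd n ⟨v, hv, hn⟩⟩
  rintro n ⟨v, hv, hn⟩
  exact (hdvd η).1 dvd_rfl v hv n hn

theorem IsWalk.exists_isPath_modEq (h : IsWalk E i j l)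
    (hd : ∀ v ∈ l, ∀ n, HasWalk E n v v → d ∣ n) :
    ∃ p, IsPath E i j p ∧ collapse (p.map (sccOf E)) = collapse (l.map (sccOf E)) ∧
      p.length ≡ l.length [MOD d] := by
  induction hlen : l.length using Nat.strong_induction_on generalizing l with
  | _ n ih =>
  subst hlen
  by_cases hnodup : l.Nodup
  · exact ⟨l, ⟨h, hnodup⟩, rfl, rfl⟩
  obtain ⟨s, a, m, t, rfl⟩ := exists_eq_append_of_not_nodup hnodup
  obtain ⟨hloop, hshort⟩ := isWalk_append_loop_iff.1 h
  obtain ⟨p, hp, hclass, hmod⟩ :=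
    ih _ (by simp) hshort (fun v hv => hd v (by grind)) rfl
  refine ⟨p, hp, hclass.trans ?_, hmod.trans ?_⟩
  · simp only [List.map_append, List.map_cons]
    refine (collapse_append_cons_congr (collapse_cons_append_of_forall_eq _ ?_) _).symm
    intro X hX
    obtain ⟨v, hv, rfl⟩ := List.mem_map.1 hX
    exact hloop.sccOf_eq_of_mem (by simp [hv])
  · have hdm : d ∣ m.length + 1 := hd a (by simp) _ (by simpa using hloop.hasWalk)
    have hlen : (s ++ a :: (m ++ a :: t)).length = (s ++ a :: t).length + (m.length + 1) := by
      grind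
    rw [hlen]
    exact (Nat.modEq_zero_iff_dvd.2 hdm).symm.add_left _

theorem IsWalk.collapse_map_sccOf_eq_self (h : IsWalk E i j l)
    (h0 : ∀ v ∈ l, ∀ n, HasWalk E n v v → n = 0) :
    collapse (l.map (sccOf E)) = l.map (sccOf E) := by
  refine collapse_eq_self ((List.isChain_map _).2 ?_)
  refine List.IsChain.imp_of_mem_imp (fun a b ha _ hab heq => ?_) h.2.2
  obtain ⟨y, hy⟩ := exists_hasWalk_iff.2 (sccOf_eq_iff.1 heq).2
  have := h0 a ha _ ((HasWalk.of_edge hab).trans hy)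
  omega

theorem IsWalk.exists_insert {n : ℕ} (h : IsWalk E i j l) (hv : v ∈ l) (hn : HasWalk E n v v) :
    ∃ l', IsWalk E i j l' ∧ l ⊆ l' ∧ l'.length = l.length + n := by
  obtain ⟨s, t, rfl⟩ := List.append_of_mem hv
  obtain ⟨h₁, h₂⟩ := isWalk_append_cons_iff.1 h
  obtain ⟨r, hr, hlen⟩ := hn
  obtain ⟨c, rfl⟩ := List.head?_eq_some_iff.1 hr.1
  refine ⟨s ++ [v] ++ (c ++ t), h₁.append (hr.append h₂), ?_, ?_⟩ <;> grind

theorem IsWalk.exists_insert_of_mem_closure {n : ℕ} (h : IsWalk E i j l)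
    (hn : n ∈ AddSubmonoid.closure {n | ∃ v ∈ l, HasWalk E n v v}) :
    ∃ l', IsWalk E i j l' ∧ l ⊆ l' ∧ l'.length = l.length + n := by
  induction hn using AddSubmonoid.closure_induction_left with
  | zero => exact ⟨l, h, List.Subset.refl l, rfl⟩
  | add_left x hx y _ ih =>
    obtain ⟨v, hv, hx⟩ := hx
    obtain ⟨l', hl', hsub, hlen⟩ := ih
    obtain ⟨l'', hl'', hsub', hlen'⟩ := hl'.exists_insert (hsub hv) hx
    exact ⟨l'', hl'', List.Subset.trans hsub hsub', by omega⟩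

theorem IsWalk.eventually_hasWalk (h : IsWalk E i j l)
    (hη : IsGCDSet {n | ∃ v ∈ l, HasWalk E n v v} η) :
    ∀ᶠ n in atTop, n ≡ l.length - 1 [MOD η] → HasWalk E n i j := by
  obtain ⟨N, hN⟩ := Nat.exists_mem_closure_of_ge {n | ∃ v ∈ l, HasWalk E n v v}
  filter_upwards [eventually_ge_atTop (l.length - 1 + N)] with n hn hmod
  have hdvd : η ∣ n - (l.length - 1) := (Nat.modEq_iff_dvd' (by omega)).1 hmod.symm
  rw [isGCDSet_iff_eq_setGcd.1 hη] at hdvd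
  obtain ⟨l', hl', -, hlen⟩ := h.exists_insert_of_mem_closure (hN _ (by omega) hdvd)
  convert hl'.hasWalk using 1
  have := h.length_pos
  omega

end Imprimitivity

section Primitivity

variable {E : V → V → Prop} {i j : V} {L : List (Set V)} {l : List V} {η : ℕ}

/-- The residues `π_{ij}^k` modulo `η` of the lengths of the paths from `i` to `j` in the class
of the condensation path `L`. -/
def pathResidues (E : V → V → Prop) (i j : V) (L : List (Set V)) (η : ℕ) : Set ℕ :=
  {r | ∃ l : List V, IsPath E i j l ∧ InClass E L l ∧ (l.length - 1) % η = r}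

theorem ClassIndex.mod_mem_pathResidues (hη : ClassIndex E L η) (h : IsWalk E i j l)
    (hl : InClass E L l) : (l.length - 1) % η ∈ pathResidues E i j L η := by
  have hclosed := (hη.isGCDSet_hasWalk_self hl).1
  obtain ⟨p, hp, hclass, hmod⟩ := h.exists_isPath_modEq fun v hv n hn => hclosed n ⟨v, hv, hn⟩
  refine ⟨p, hp, hclass.trans hl, Nat.ModEq.add_right_cancel' 1 ?_⟩
  rwa [Nat.sub_add_cancel hp.1.length_pos, Nat.sub_add_cancel h.length_pos]

theorem ClassIndex.length_eq (hη : ClassIndex E L 0) (h : IsWalk E i j l) (hl : InClass E L l) :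
    l.length = L.length := by
  have hclosed := (hη.isGCDSet_hasWalk_self hl).1
  have hself := h.collapse_map_sccOf_eq_self
    fun v hv n hn => zero_dvd_iff.1 (hclosed n ⟨v, hv, hn⟩)
  rw [← hl, hself, List.length_map]

theorem lt_of_mem_pathResidues {r : ℕ} (hη : η ≠ 0) (hr : r ∈ pathResidues E i j L η) :
    r < η := by
  obtain ⟨l, -, -, rfl⟩ := hr
  exact Nat.mod_lt _ (Nat.pos_of_ne_zero hη)

theorem ClassIndex.eventually_hasWalk (hη : ClassIndex E L η) (h0 : η ≠ 0) :
    ∀ᶠ n in atTop, n % η ∈ pathResidues E i j L η → HasWalk E n i j := by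
  have hfin : (pathResidues E i j L η).Finite :=
    (Set.finite_Iio η).subset fun r hr => lt_of_mem_pathResidues h0 hr
  have hres : ∀ r ∈ pathResidues E i j L η, ∀ᶠ n in atTop, n % η = r → HasWalk E n i j := by
    rintro _ ⟨p, hp, hclass, rfl⟩
    exact hp.1.eventually_hasWalk (hη.isGCDSet_hasWalk_self hclass)
  filter_upwards [(eventually_all_finite hfin).2 hres] with n hn hmem
  exact hn _ hmem rfl

theorem eventually_hasWalk_iff {ι : Type*} [Finite ι] {P : ι → List (Set V)} {η : ι → ℕ}
    (hP : ∀ L, IsCondPath E i j L → ∃ k, P k = L) (hη : ∀ k, ClassIndex E (P k) (η k)) :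
    ∀ᶠ n in atTop, HasWalk E n i j ↔
      ∃ k, η k ≠ 0 ∧ n % η k ∈ pathResidues E i j (P k) (η k) := by
  have hlong : ∀ᶠ n in atTop, ∀ k, (P k).length < n :=
    eventually_all.2 fun k => eventually_gt_atTop _
  have hwalk : ∀ᶠ n in atTop, ∀ k, η k ≠ 0 → n % η k ∈ pathResidues E i j (P k) (η k) →
      HasWalk E n i j := by
    refine eventually_all.2 fun k => ?_
    by_cases h0 : η k = 0
    · simp [h0]
    · simpa [h0] using (hη k).eventually_hasWalk h0
  filter_upwards [hlong, hwalk] with n hn hwalk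
  refine ⟨?_, fun ⟨k, h0, hk⟩ => hwalk k h0 hk⟩
  rintro ⟨l, hl, hlen⟩
  obtain ⟨k, hk⟩ := hP _ hl.isCondPath_collapse
  have hmem := (hη k).mod_mem_pathResidues hl hk.symm
  rw [hlen, Nat.add_sub_cancel] at hmem
  refine ⟨k, fun h0 => ?_, hmem⟩
  have hlength := (h0 ▸ hη k : ClassIndex E (P k) 0).length_eq hl hk.symm
  have := hn k
  omega

theorem rho_infinite_and_sigmaSet_finite_iff :
    ((rho E i j).Infinite ∧ (sigmaSet E i j).Finite) ↔ ∀ᶠ n in atTop, HasWalk E n i j := by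
  have hpos : ∀ᶠ n : ℕ in atTop, 0 < n := eventually_gt_atTop 0
  have hσ : (sigmaSet E i j).Finite ↔ ∀ᶠ n in atTop, HasWalk E n i j := by
    have hsigma : sigmaSet E i j = {n | ¬ (0 < n → HasWalk E n i j)} := by
      ext n
      simp +contextual [sigmaSet, rho]
    rw [hsigma, ← eventually_cofinite, Nat.cofinite_eq_atTop]
    exact eventually_congr (hpos.mono fun n hn => by simp [hn])
  refine ⟨fun h => hσ.1 h.2, fun h => ⟨?_, hσ.2 h⟩⟩
  exact Nat.frequently_atTop_iff_infinite.1 (hpos.and h).frequently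

theorem stmt7_general (E : V → V → Prop) (i j : V) {ι : Type*} [Finite ι]
    (P : ι → List (Set V)) (hP : Set.range P = {L | IsCondPath E i j L})
    (η : ι → ℕ) (hη : ∀ k, ClassIndex E (P k) (η k))
    (ηbar : ℕ) (hηbar : IsLCMSet {m : ℕ | m ≠ 0 ∧ ∃ k, η k = m} ηbar) :
    ((rho E i j).Infinite ∧ (sigmaSet E i j).Finite) ↔
      (⋃ k, residueLift (pathResidues E i j (P k) (η k)) (η k) ηbar) = Set.Iio ηbar := by
  have hpos : 0 < ηbar :=
    hηbar.pos ((Set.finite_range η).subset fun _ hm => hm.2) fun h => h.1 rfl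
  have hdvd : ∀ k, η k ≠ 0 → η k ∣ ηbar := fun k h0 => hηbar.1 _ ⟨h0, k, rfl⟩
  have hper := periodic_exists_mod_mem (fun k => pathResidues E i j (P k) (η k)) hdvd
  calc ((rho E i j).Infinite ∧ (sigmaSet E i j).Finite)
      ↔ ∀ᶠ n in atTop, HasWalk E n i j := rho_infinite_and_sigmaSet_finite_iff
    _ ↔ ∀ᶠ n in atTop, ∃ k, η k ≠ 0 ∧ n % η k ∈ pathResidues E i j (P k) (η k) :=
      eventually_congr (eventually_hasWalk_iff (fun L hL => hP.ge hL) hη)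
    _ ↔ ∀ n < ηbar, ∃ k, η k ≠ 0 ∧ n % η k ∈ pathResidues E i j (P k) (η k) :=
      (eventually_atTop_iff_forall_of_periodic hper hpos).trans
        (forall_iff_forall_lt_of_periodic hper hpos)
    _ ↔ _ := by
      simp only [Set.ext_iff, Set.mem_iUnion, Set.mem_Iio, mem_residueLift_iff hpos (hdvd _)
        fun h0 _ => lt_of_mem_pathResidues h0, exists_and_left, and_iff_left_iff_imp]

end Primitivity

theorem stmt7 [Fintype V] (E : V → V → Prop) (i j : V)
    -- `Ps` enumerates (without repetition) all paths in the condensation digraph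
    -- from the SCC of `i` to the SCC of `j`
    (K : ℕ) (Ps : Fin K → List (Set V))
    (hPs : ∀ k : Fin K, IsCondPath E i j (Ps k))
    (hPsInj : Function.Injective Ps)
    (hPsSurj : ∀ L : List (Set V), IsCondPath E i j L → ∃ k : Fin K, Ps k = L)
    -- `ηk k` is the gcd of the indices of imprimitivity of the T2SCCs on `Ps k`
    -- (it is forced to be `0` when there is no T2SCC on `Ps k`)
    (ηk : Fin K → ℕ)
    (hηk : ∀ k : Fin K,
      IsGCDSet {m : ℕ | ∃ X ∈ Ps k, IsT2 E X ∧ ImprimIndex E X m} (ηk k))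
    -- `πk k` is the set of residues mod `ηk k` of the lengths of the paths from
    -- `i` to `j` in the class of `Ps k`, with `πk k = ∅` when `ηk k = 0`
    (πk : Fin K → Set ℕ)
    (hπk0 : ∀ k : Fin K, ηk k = 0 → πk k = ∅)
    (hπk : ∀ k : Fin K, ηk k ≠ 0 →
      πk k = {r : ℕ | ∃ l : List V, IsPath E i j l ∧ InClass E (Ps k) l ∧
        (l.length - 1) % ηk k = r})
    -- `ηbar` is the lcm of the nonzero `ηk k`
    (ηbar : ℕ)
    (hηbar : IsLCMSet {m : ℕ | m ≠ 0 ∧ ∃ k : Fin K, ηk k = m} ηbar)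
    -- `πbar` is the union over `k` of `π̃k := {a + b·ηk k | a ∈ πk k, 0 ≤ b ≤ ηbar/ηk k - 1}`
    (πbar : Set ℕ)
    (hπbar : πbar = ⋃ k : Fin K,
      if ηk k = 0 then (∅ : Set ℕ)
      else {c : ℕ | ∃ a ∈ πk k, ∃ b : ℕ, b ≤ ηbar / ηk k - 1 ∧ c = a + b * ηk k}) :
    -- the pair (i,j) is primitive iff `πbar` is a complete residue system mod `ηbar`
    ((rho E i j).Infinite ∧ (sigmaSet E i j).Finite) ↔ πbar = Set.Iio ηbar := by
  have hlift : πbar = ⋃ k, residueLift (pathResidues E i j (Ps k) (ηk k)) (ηk k) ηbar :=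
    hπbar.trans <| Set.iUnion_congr fun k =>
      ite_congr rfl (fun _ => rfl) fun h0 => by rw [hπk k h0, pathResidues]
  have hrange : Set.range Ps = {L | IsCondPath E i j L} :=
    Set.Subset.antisymm (Set.range_subset_iff.2 hPs) hPsSurj
  exact hlift ▸ stmt7_general E i j Ps hrange ηk hηk ηbar hηbar

end BCNPaper7
end

section
/- With the condensation notation below, for any ordered pair of vertices (i, j) of a finite directed graph G, the pair (i, j) belongs to the imprimitive category — i.e., both the set of reachable time steps ρ(i,j) and the set of unreachable time steps σ(i,j) are infinite — if and only if π̄_{ij} ≠ ∅ and π̄_{ij} ≠ {0, 1, ..., η̄_{ij} − 1}. -/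
namespace BCNPaper8

variable {V : Type*}

/-- A walk from `i` to `j` encoded as a nonempty list of visited vertices. -/
def IsWalk (E : V → V → Prop) (i j : V) (l : List V) : Prop :=
  l.head? = some i ∧ l.getLast? = some j ∧ l.Chain' E

/-- There is a walk of length exactly `k` from `i` to `j`. -/
def HasWalk (E : V → V → Prop) (k : ℕ) (i j : V) : Prop :=
  ∃ l : List V, IsWalk E i j l ∧ l.length = k + 1

/-- The set of reachable time steps ρ(i,j). -/
def rho (E : V → V → Prop) (i j : V) : Set ℕ :=
  {k | 0 < k ∧ HasWalk E k i j}

/-- The set of unreachable time steps σ(i,j). -/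
def sigmaSet (E : V → V → Prop) (i j : V) : Set ℕ :=
  {k | 0 < k ∧ k ∉ rho E i j}

/-- A path is a walk with pairwise distinct vertices. -/
def IsPath (E : V → V → Prop) (i j : V) (l : List V) : Prop :=
  IsWalk E i j l ∧ l.Nodup

/-- The strongly connected component of a vertex `i`. -/
def sccOf (E : V → V → Prop) (i : V) : Set V :=
  {v | v = i ∨ ((∃ k : ℕ, 0 < k ∧ HasWalk E k i v) ∧ (∃ k : ℕ, 0 < k ∧ HasWalk E k v i))}

/-- `X` is a strongly connected component of the graph. -/
def IsSCC (E : V → V → Prop) (X : Set V) : Prop :=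
  ∃ i : V, X = sccOf E i

/-- There is a cycle (closed walk of positive length `k` with no repeated vertices
other than its endpoints) all of whose vertices lie in `X`. -/
def IsCycleIn (E : V → V → Prop) (X : Set V) (k : ℕ) : Prop :=
  ∃ v : V, ∃ l : List V, IsWalk E v v l ∧ l.length = k + 1 ∧ 0 < k ∧
    l.dropLast.Nodup ∧ ∀ u ∈ l, u ∈ X

/-- `g` is the greatest common divisor of the set `S` of natural numbers
(`g = 0` if `S` is empty). -/
def IsGCDSet (S : Set ℕ) (g : ℕ) : Prop :=
  (∀ s ∈ S, g ∣ s) ∧ ∀ d : ℕ, (∀ s ∈ S, d ∣ s) → d ∣ g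

/-- `m` is the least common multiple of the set `S` of natural numbers
(`m = 1` if `S` is empty). -/
def IsLCMSet (S : Set ℕ) (m : ℕ) : Prop :=
  (∀ s ∈ S, s ∣ m) ∧ ∀ c : ℕ, (∀ s ∈ S, s ∣ c) → m ∣ c

/-- A type-2 SCC: an SCC containing a cycle of the graph. -/
def IsT2 (E : V → V → Prop) (X : Set V) : Prop :=
  IsSCC E X ∧ ∃ k : ℕ, IsCycleIn E X k

/-- `η` is the index of imprimitivity of the T2SCC `X`: the gcd of the lengths of
the cycles of the graph contained in `X`. -/
def ImprimIndex (E : V → V → Prop) (X : Set V) (η : ℕ) : Prop :=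
  IsGCDSet {k : ℕ | IsCycleIn E X k} η

/-- The edge relation of the condensation digraph. -/
def CondE (E : V → V → Prop) (X Y : Set V) : Prop :=
  X ≠ Y ∧ ∃ u ∈ X, ∃ v ∈ Y, E u v

/-- `L` is a path in the condensation digraph from the SCC of `i` to the SCC of `j`. -/
def IsCondPath (E : V → V → Prop) (i j : V) (L : List (Set V)) : Prop :=
  L.head? = some (sccOf E i) ∧ L.getLast? = some (sccOf E j) ∧
  L.Chain' (CondE E) ∧ L.Nodup ∧ ∀ X ∈ L, IsSCC E X

/-- Remove consecutive repetitions from a list. -/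
noncomputable def collapse {α : Type*} (l : List α) : List α :=
  letI : DecidableRel (α := α) (· ≠ ·) := Classical.decRel _
  l.destutter (· ≠ ·)

/-- A walk `l` in `G` belongs to the class of the condensation path `L` if the
sequence of SCCs of its vertices, with consecutive repetitions removed, is `L`. -/
def InClass (E : V → V → Prop) (L : List (Set V)) (l : List V) : Prop :=
  collapse (l.map (sccOf E)) = L

/-!
Cutting a loop out of a walk keeps its class and changes its length by a multiple of `η_{ij}^k`, so
the length of a walk in the `k`-th class is congruent modulo `η_{ij}^k` to that of a path in the
class. Conversely, inserting closed walks at the vertices of a path lengthens it by any large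
multiple of `η_{ij}^k`, as in a numerical semigroup. If `η_{ij}^k = 0`, the class meets no cycle,
and all its walks are as long as the condensation path. Hence for large `n` the existence of a walk
of length `n` only depends on whether `n` modulo the least common multiple lies in `π̄_{ij}`.
-/

open Filter Relation

theorem IsGCDSet.dvd_iff {S : Set ℕ} {g d : ℕ} (h : IsGCDSet S g) :
    d ∣ g ↔ ∀ s ∈ S, d ∣ s :=
  ⟨fun hd s hs => hd.trans (h.1 s hs), h.2 d⟩

theorem isGCDSet_setGcd (S : Set ℕ) : IsGCDSet S (Nat.setGcd S) :=
  ⟨fun _ => Nat.setGcd_dvd_of_mem, fun _ => Nat.dvd_setGcd_iff.2⟩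

theorem IsLCMSet.ne_zero {S : Set ℕ} {m : ℕ} (h : IsLCMSet S m) (hS : S.Finite) (h0 : 0 ∉ S) :
    m ≠ 0 := by
  have hprod : ∏ s ∈ hS.toFinset, s ≠ 0 :=
    Finset.prod_ne_zero_iff.2 fun s hs hs0 => h0 (hs0 ▸ hS.mem_toFinset.1 hs)
  exact ne_zero_of_dvd_ne_zero hprod
    (h.2 _ fun s hs => Finset.dvd_prod_of_mem id (hS.mem_toFinset.2 hs))

theorem exists_eq_add_mul_iff_mod_mem {η m c : ℕ} {A : Set ℕ} (hm : m ≠ 0) (hdvd : η ∣ m)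
    (hA : ∀ a ∈ A, a < η) :
    (∃ a ∈ A, ∃ b : ℕ, b ≤ m / η - 1 ∧ c = a + b * η) ↔ c < m ∧ c % η ∈ A := by
  obtain ⟨q, rfl⟩ := hdvd
  obtain ⟨hη, hq⟩ := mul_ne_zero_iff.1 hm
  rw [Nat.mul_div_cancel_left q (Nat.pos_of_ne_zero hη)]
  constructor
  · rintro ⟨a, ha, b, hb, rfl⟩
    refine ⟨?_, by rwa [Nat.add_mul_mod_self_right, Nat.mod_eq_of_lt (hA a ha)]⟩
    calc a + b * η < η + b * η := Nat.add_lt_add_right (hA a ha) _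
      _ = η * (b + 1) := by ring
      _ ≤ η * q := Nat.mul_le_mul_left η (by omega)
  · rintro ⟨hc, hcA⟩
    exact ⟨_, hcA, c / η, Nat.le_sub_one_of_lt (Nat.div_lt_of_lt_mul hc),
      (Nat.mod_add_div' c η).symm⟩

theorem mem_iUnion_lift_iff {ι : Type*} {η : ι → ℕ} {π : ι → Set ℕ} {m c : ℕ} (hm : m ≠ 0)
    (hdvd : ∀ k, η k ≠ 0 → η k ∣ m) (hπ : ∀ k, η k ≠ 0 → ∀ a ∈ π k, a < η k) :
    (c ∈ ⋃ k, if η k = 0 then (∅ : Set ℕ)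
      else {c : ℕ | ∃ a ∈ π k, ∃ b : ℕ, b ≤ m / η k - 1 ∧ c = a + b * η k}) ↔
      c < m ∧ ∃ k, η k ≠ 0 ∧ c % η k ∈ π k := by
  rw [Set.mem_iUnion, ← exists_and_left]
  refine exists_congr fun k => ?_
  by_cases hk : η k = 0
  · simp [hk]
  · rw [if_neg hk, and_left_comm, and_iff_right hk]
    exact exists_eq_add_mul_iff_mod_mem hm (hdvd k hk) (hπ k hk)

theorem infinite_setOf_pos_and_iff {p : ℕ → Prop} {m : ℕ} {S : Set ℕ} (hm : m ≠ 0)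
    (h : ∀ᶠ n in atTop, p n ↔ n % m ∈ S) :
    {n | 0 < n ∧ p n}.Infinite ↔ ∃ r ∈ S, r < m := by
  have hfreq : (∃ᶠ n in atTop, 0 < n ∧ p n) ↔ ∃ᶠ n in atTop, n % m ∈ S :=
    frequently_congr <| by
      filter_upwards [h, eventually_gt_atTop 0] with n hn hpos
      rw [hn, and_iff_right hpos]
  rw [← Nat.frequently_atTop_iff_infinite, hfreq]
  constructor
  · intro hS
    obtain ⟨n, hn⟩ := hS.exists
    exact ⟨_, hn, Nat.mod_lt n (Nat.pos_of_ne_zero hm)⟩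
  · rintro ⟨r, hr, hrm⟩
    exact (Nat.frequently_mod_eq hrm).mono fun n hn => hn ▸ hr

theorem exists_eq_append_of_not_nodup {α : Type*} {l : List α} (h : ¬l.Nodup) :
    ∃ l₁ x l₂ l₃, l = l₁ ++ x :: (l₂ ++ x :: l₃) ∧ (x :: l₂).Nodup := by
  induction l with
  | nil => exact absurd List.nodup_nil h
  | cons a t ih =>
    by_cases ht : t.Nodup
    · obtain ⟨l₂, l₃, rfl⟩ := List.append_of_mem (by_contra fun ha => h (ht.cons ha) : a ∈ t)
      have ⟨hl₂, _, hdisj⟩ := List.nodup_append.1 ht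
      exact ⟨[], a, l₂, l₃, rfl, hl₂.cons fun ha => hdisj a ha a List.mem_cons_self rfl⟩
    · obtain ⟨l₁, x, l₂, l₃, rfl, hx⟩ := ih ht
      exact ⟨a :: l₁, x, l₂, l₃, rfl, hx⟩

section Collapse

variable {α : Type*} {a b : α} {l : List α} {r : α → α → Prop}

theorem collapse_cons_self (a : α) (l : List α) : collapse (a :: a :: l) = collapse (a :: l) := by
  simp [collapse, List.destutter]

theorem collapse_cons_of_ne (h : a ≠ b) (l : List α) :
    collapse (a :: b :: l) = a :: collapse (b :: l) := by
  simp [collapse, List.destutter, h]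

theorem exists_collapse_cons_eq (a : α) (l : List α) : ∃ t, collapse (a :: l) = a :: t := by
  induction l with
  | nil => exact ⟨[], rfl⟩
  | cons b l ih =>
    obtain rfl | hab := eq_or_ne a b
    · rwa [collapse_cons_self]
    · exact ⟨_, collapse_cons_of_ne hab l⟩

theorem head?_collapse : ∀ l : List α, (collapse l).head? = l.head?
  | [] => rfl
  | a :: l => by
    obtain ⟨t, ht⟩ := exists_collapse_cons_eq a l
    rw [ht, List.head?_cons, List.head?_cons]

theorem getLast?_collapse (l : List α) : (collapse l).getLast? = l.getLast? := by
  induction l using List.twoStepInduction with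
  | nil => rfl
  | singleton => rfl
  | cons_cons a b l _ ih =>
    rw [List.getLast?_cons_cons, ← ih b]
    obtain rfl | hab := eq_or_ne a b
    · rw [collapse_cons_self]
    · obtain ⟨t, ht⟩ := exists_collapse_cons_eq b l
      rw [collapse_cons_of_ne hab, ht, List.getLast?_cons_cons]

theorem isChain_collapse (h : l.IsChain fun a b => a ≠ b → r a b) : (collapse l).IsChain r := by
  induction l using List.twoStepInduction with
  | nil => exact .nil
  | singleton a => exact .singleton a
  | cons_cons a b l _ ih =>
    obtain ⟨hr, hl⟩ := List.isChain_cons_cons.1 h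
    obtain rfl | hab := eq_or_ne a b
    · rw [collapse_cons_self]
      exact ih a hl
    · have hbl := ih b hl
      obtain ⟨t, ht⟩ := exists_collapse_cons_eq b l
      rw [ht] at hbl
      rw [collapse_cons_of_ne hab, ht]
      exact hbl.cons_cons (hr hab)

theorem collapse_of_isChain_ne (h : l.IsChain (· ≠ ·)) : collapse l = l :=
  @List.destutter_of_isChain _ _ (Classical.decRel _) l h

open scoped Classical in
theorem collapse_eq_dedup [Std.Antisymm r] (h : l.Pairwise r) : collapse l = l.dedup := by
  rw [← h.destutter_eq_dedup, collapse]
  congr!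

end Collapse

section Walks

variable {E : V → V → Prop} {i j k x v : V} {l l₁ l₂ l₃ : List V} {m n : ℕ}

theorem isWalk_iff : IsWalk E i j l ↔ l.head? = some i ∧ l.getLast? = some j ∧ l.IsChain E :=
  Iff.rfl

theorem IsWalk.isChain (h : IsWalk E i j l) : l.IsChain E :=
  h.2.2

theorem isWalk_append_cons_iff :
    IsWalk E i j (l₁ ++ x :: l₂) ↔ IsWalk E i x (l₁ ++ [x]) ∧ IsWalk E x j (x :: l₂) := by
  have hhead : (l₁ ++ x :: l₂).head? = (l₁ ++ [x]).head? := by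
    rw [List.head?_append, List.head?_append, List.head?_cons, List.head?_cons]
  rw [isWalk_iff, isWalk_iff, isWalk_iff, List.isChain_split, hhead,
    List.getLast?_append_cons, List.getLast?_concat, List.head?_cons]
  tauto

theorem IsWalk.exists_eq_cons (h : IsWalk E i j l) : ∃ t, l = i :: t :=
  List.head?_eq_some_iff.1 h.1

theorem isWalk_singleton (i : V) : IsWalk E i i [i] :=
  ⟨rfl, rfl, .singleton i⟩

theorem isWalk_pair (h : E i j) : IsWalk E i j [i, j] :=
  ⟨rfl, rfl, List.isChain_pair.2 h⟩

theorem IsWalk.hasWalk (h : IsWalk E i j l) : HasWalk E (l.length - 1) i j := by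
  obtain ⟨t, rfl⟩ := h.exists_eq_cons
  exact ⟨_, h, rfl⟩

theorem HasWalk.trans (h₁ : HasWalk E m i j) (h₂ : HasWalk E n j k) : HasWalk E (m + n) i k := by
  obtain ⟨l₁, hw₁, hlen₁⟩ := h₁
  obtain ⟨l₂, hw₂, hlen₂⟩ := h₂
  obtain ⟨s, rfl⟩ := List.getLast?_eq_some_iff.1 hw₁.2.1
  obtain ⟨t, rfl⟩ := hw₂.exists_eq_cons
  refine ⟨s ++ j :: t, isWalk_append_cons_iff.2 ⟨hw₁, hw₂⟩, ?_⟩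
  simp only [List.length_append, List.length_cons, List.length_nil] at hlen₁ hlen₂ ⊢
  omega

theorem IsWalk.reflTransGen (h : IsWalk E i j l) : ReflTransGen E i j := by
  obtain ⟨t, rfl⟩ := h.exists_eq_cons
  refine List.relationReflTransGen_of_exists_isChain_cons t h.isChain (Option.some_injective _ ?_)
  rw [← List.getLast?_eq_some_getLast, h.2.1]

theorem exists_isWalk_iff_reflTransGen : (∃ l, IsWalk E i j l) ↔ ReflTransGen E i j := by
  refine ⟨fun ⟨_, h⟩ => h.reflTransGen, fun h => ?_⟩
  obtain ⟨t, hchain, hlast⟩ := List.exists_isChain_cons_of_relationReflTransGen h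
  exact ⟨i :: t, rfl, hlast ▸ List.getLast?_eq_some_getLast _, hchain⟩

theorem exists_hasWalk_iff_reflTransGen : (∃ n, HasWalk E n i j) ↔ ReflTransGen E i j :=
  ⟨fun ⟨_, _, h, _⟩ => h.reflTransGen, fun h =>
    have ⟨_, hl⟩ := exists_isWalk_iff_reflTransGen.2 h
    ⟨_, hl.hasWalk⟩⟩

theorem exists_pos_hasWalk_iff_reflTransGen (h : i ≠ j) :
    (∃ n, 0 < n ∧ HasWalk E n i j) ↔ ReflTransGen E i j := by
  refine ⟨fun ⟨n, _, hn⟩ => exists_hasWalk_iff_reflTransGen.1 ⟨n, hn⟩, fun hij => ?_⟩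
  obtain ⟨n, l, hl, hlen⟩ := exists_hasWalk_iff_reflTransGen.2 hij
  refine ⟨n, Nat.pos_of_ne_zero ?_, l, hl, hlen⟩
  rintro rfl
  obtain ⟨y, rfl⟩ := List.length_eq_one_iff.1 hlen
  exact h (Option.some_injective _ (hl.1.symm.trans hl.2.1))

theorem IsWalk.reflTransGen_of_mem (h : IsWalk E i j l) (hv : v ∈ l) :
    ReflTransGen E i v ∧ ReflTransGen E v j := by
  obtain ⟨s, t, rfl⟩ := List.append_of_mem hv
  obtain ⟨h₁, h₂⟩ := isWalk_append_cons_iff.1 h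
  exact ⟨h₁.reflTransGen, h₂.reflTransGen⟩

theorem IsWalk.split_loop (h : IsWalk E i j (l₁ ++ x :: (l₂ ++ x :: l₃))) :
    IsWalk E i j (l₁ ++ x :: l₃) ∧ IsWalk E x x (x :: l₂ ++ [x]) := by
  obtain ⟨hix, hxj⟩ := isWalk_append_cons_iff.1 h
  rw [← List.cons_append] at hxj
  obtain ⟨hloop, hrest⟩ := isWalk_append_cons_iff.1 hxj
  exact ⟨isWalk_append_cons_iff.2 ⟨hix, hrest⟩, hloop⟩

end Walks

section Components

variable {E : V → V → Prop} {i j x y v w : V} {l l₁ l₂ l₃ : List V} {k η : ℕ}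

theorem mem_sccOf_iff : v ∈ sccOf E i ↔ ReflTransGen E i v ∧ ReflTransGen E v i := by
  obtain rfl | hvi := eq_or_ne v i
  · exact iff_of_true (Or.inl rfl) ⟨.refl, .refl⟩
  · rw [← exists_pos_hasWalk_iff_reflTransGen hvi, ← exists_pos_hasWalk_iff_reflTransGen hvi.symm]
    exact or_iff_right hvi

theorem mem_sccOf_self (i : V) : i ∈ sccOf E i :=
  Or.inl rfl

theorem sccOf_eq_iff : sccOf E v = sccOf E w ↔ ReflTransGen E v w ∧ ReflTransGen E w v := by
  refine ⟨fun h => mem_sccOf_iff.1 (h ▸ mem_sccOf_self w), fun ⟨hvw, hwv⟩ => ?_⟩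
  ext u
  rw [mem_sccOf_iff, mem_sccOf_iff]
  exact ⟨fun ⟨h₁, h₂⟩ => ⟨hwv.trans h₁, h₂.trans hvw⟩,
    fun ⟨h₁, h₂⟩ => ⟨hvw.trans h₁, h₂.trans hwv⟩⟩

theorem IsWalk.sccOf_eq_of_mem (h : IsWalk E x x l) (hv : v ∈ l) : sccOf E v = sccOf E x :=
  sccOf_eq_iff.2 (h.reflTransGen_of_mem hv).symm

instance antisymm_map_reflTransGen_sccOf :
    Std.Antisymm (Relation.Map (ReflTransGen E) (sccOf E) (sccOf E)) where
  antisymm := by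
    rintro _ _ ⟨u, v, huv, rfl, rfl⟩ ⟨v', u', hvu, hv, hu⟩
    exact sccOf_eq_iff.2
      ⟨huv, ((sccOf_eq_iff.1 hv).2.trans hvu).trans (sccOf_eq_iff.1 hu).1⟩

-- Along a walk the components increase for reachability, so none of them is met again once left.
open scoped Classical in
theorem IsWalk.collapse_map_sccOf (h : IsWalk E i j l) :
    collapse (l.map (sccOf E)) = (l.map (sccOf E)).dedup := by
  have hchain : l.IsChain (ReflTransGen E) := List.IsChain.imp (fun _ _ => .single) h.isChain
  refine collapse_eq_dedup (r := Relation.Map (ReflTransGen E) (sccOf E) (sccOf E)) ?_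
  exact List.pairwise_map.2 (hchain.pairwise.imp fun huv => ⟨_, _, huv, rfl, rfl⟩)

theorem IsWalk.mem_collapse_map_sccOf (h : IsWalk E i j l) {X : Set V} :
    X ∈ collapse (l.map (sccOf E)) ↔ ∃ v ∈ l, sccOf E v = X := by
  classical rw [h.collapse_map_sccOf, List.mem_dedup, List.mem_map]

theorem IsWalk.isCondPath_collapse (h : IsWalk E i j l) :
    IsCondPath E i j (collapse (l.map (sccOf E))) := by
  refine ⟨?_, ?_, isChain_collapse ?_, ?_, fun X hX => ?_⟩
  · rw [head?_collapse, List.head?_map, h.1, Option.map_some]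
  · rw [getLast?_collapse, List.getLast?_map, h.2.1, Option.map_some]
  · exact (List.isChain_map _).2 <| List.IsChain.imp
      (fun u v huv hne => ⟨hne, u, mem_sccOf_self u, v, mem_sccOf_self v, huv⟩) h.isChain
  · classical exact h.collapse_map_sccOf ▸ List.nodup_dedup _
  · obtain ⟨v, _, rfl⟩ := h.mem_collapse_map_sccOf.1 hX
    exact ⟨v, rfl⟩

theorem IsWalk.collapse_cut_loop (h : IsWalk E i j (l₁ ++ x :: (l₂ ++ x :: l₃))) :
    collapse ((l₁ ++ x :: l₃).map (sccOf E)) =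
      collapse ((l₁ ++ x :: (l₂ ++ x :: l₃)).map (sccOf E)) := by
  classical
  obtain ⟨hcut, hloop⟩ := h.split_loop
  have hsub : (x :: l₂).map (sccOf E) ⊆ (x :: l₃).map (sccOf E) := by
    intro X hX
    obtain ⟨v, hv, rfl⟩ := List.mem_map.1 hX
    rw [hloop.sccOf_eq_of_mem (List.mem_append_left [x] hv)]
    exact List.mem_cons_self
  rw [h.collapse_map_sccOf, hcut.collapse_map_sccOf, ← List.cons_append, List.map_append,
    List.map_append, List.map_append, List.dedup_append, List.dedup_append,
    hsub.dedup_append_right]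

theorem IsCycleIn.hasWalk (h : IsCycleIn E (sccOf E v) k) :
    ∃ w ∈ sccOf E v, HasWalk E k w w := by
  obtain ⟨w, l, hl, hlen, -, -, hsub⟩ := h
  exact ⟨w, hsub w (List.mem_of_mem_head? hl.1), l, hl, hlen⟩

theorem IsWalk.isCycleIn (h : IsWalk E x x (x :: l ++ [x])) (hl : (x :: l).Nodup) :
    IsCycleIn E (sccOf E x) (l.length + 1) :=
  ⟨x, _, h, by simp, Nat.succ_pos _, by rwa [List.dropLast_concat],
    fun u hu => h.sccOf_eq_of_mem hu ▸ mem_sccOf_self u⟩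

theorem IsWalk.exists_isPath_modEq (h : IsWalk E i j l)
    (hη : ∀ v ∈ l, ∀ k, IsCycleIn E (sccOf E v) k → η ∣ k) :
    ∃ p, IsPath E i j p ∧ collapse (p.map (sccOf E)) = collapse (l.map (sccOf E)) ∧
      p.length - 1 ≡ l.length - 1 [MOD η] := by
  induction hn : l.length using Nat.strong_induction_on generalizing l with
  | _ n ih =>
  by_cases hl : l.Nodup
  · exact ⟨l, ⟨h, hl⟩, rfl, hn ▸ rfl⟩
  obtain ⟨l₁, x, l₂, l₃, rfl, hx⟩ := exists_eq_append_of_not_nodup hl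
  obtain ⟨hcut, hloop⟩ := h.split_loop
  have hdvd : η ∣ l₂.length + 1 := hη x (by simp) _ (hloop.isCycleIn hx)
  have hlen : n - 1 = (l₁ ++ x :: l₃).length - 1 + (l₂.length + 1) := by
    simp only [List.length_append, List.length_cons] at hn ⊢
    omega
  have hlt : (l₁ ++ x :: l₃).length < n := by
    simp only [List.length_append, List.length_cons] at hn ⊢
    omega
  have hsub : l₁ ++ x :: l₃ ⊆ l₁ ++ x :: (l₂ ++ x :: l₃) :=
    ((List.sublist_append_right (x :: l₂) (x :: l₃)).append_left l₁).subset
  obtain ⟨p, hp, hclass, hmod⟩ := ih _ hlt hcut (fun v hv => hη v (hsub hv)) rfl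
  refine ⟨p, hp, hclass.trans h.collapse_cut_loop, hmod.trans ?_⟩
  rw [hlen]
  exact (Nat.modEq_iff_dvd' (Nat.le_add_right _ _)).2 (by rwa [Nat.add_sub_cancel_left])

theorem exists_isCycleIn_of_sccOf_eq (hxy : E x y) (hscc : sccOf E x = sccOf E y) :
    ∃ k, IsCycleIn E (sccOf E x) k := by
  obtain ⟨l, hl⟩ := exists_isWalk_iff_reflTransGen.2 (sccOf_eq_iff.1 hscc).2
  obtain ⟨p, ⟨hp, hnodup⟩, -⟩ := hl.exists_isPath_modEq (η := 1) fun _ _ k _ => one_dvd k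
  obtain ⟨s, rfl⟩ := List.getLast?_eq_some_iff.1 hp.2.1
  have hclosed : IsWalk E x x (x :: s ++ [x]) := by
    obtain ⟨t, ht⟩ := hp.exists_eq_cons
    rw [List.cons_append, ht]
    exact isWalk_append_cons_iff (l₁ := [x]).2 ⟨isWalk_pair hxy, ht ▸ hp⟩
  have ⟨hs, _, hdisj⟩ := List.nodup_append.1 hnodup
  exact ⟨_, hclosed.isCycleIn (hs.cons fun hx => hdisj x hx x List.mem_cons_self rfl)⟩

theorem IsWalk.collapse_map_sccOf_of_forall_not_isCycleIn (h : IsWalk E i j l)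
    (hacyclic : ∀ v ∈ l, ∀ k, ¬IsCycleIn E (sccOf E v) k) :
    collapse (l.map (sccOf E)) = l.map (sccOf E) := by
  refine collapse_of_isChain_ne ((List.isChain_map _).2 ?_)
  refine List.IsChain.imp_of_mem_imp (fun u v hu _ huv hscc => ?_) h.isChain
  obtain ⟨k, hk⟩ := exists_isCycleIn_of_sccOf_eq huv hscc
  exact hacyclic u hu k hk

end Components

section ClosedWalks

variable {E : V → V → Prop} {i j v : V} {l : List V} {k n : ℕ}

/-- The additive monoid of the lengths of the closed walks at `v`, the trivial walk included. -/
def closedWalkLengths (E : V → V → Prop) (v : V) : AddSubmonoid ℕ where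
  carrier := {k | HasWalk E k v v}
  zero_mem' := (isWalk_singleton v).hasWalk
  add_mem' := HasWalk.trans

theorem setGcd_closedWalkLengths_dvd (h : IsCycleIn E (sccOf E v) k) :
    Nat.setGcd (closedWalkLengths E v) ∣ k := by
  obtain ⟨w, hw, hk⟩ := h.hasWalk
  obtain ⟨hvw, hwv⟩ := mem_sccOf_iff.1 hw
  obtain ⟨a, ha⟩ := exists_hasWalk_iff_reflTransGen.2 hvw
  obtain ⟨b, hb⟩ := exists_hasWalk_iff_reflTransGen.2 hwv
  have hdetour : Nat.setGcd (closedWalkLengths E v) ∣ k + (a + b) := by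
    rw [← Nat.add_left_comm]
    exact Nat.setGcd_dvd_of_mem (ha.trans (hk.trans hb))
  exact (Nat.dvd_add_left (Nat.setGcd_dvd_of_mem (ha.trans hb))).1 hdetour

theorem IsWalk.hasWalk_add_of_mem_iSup (h : IsWalk E i j l)
    (hn : n ∈ ⨆ v ∈ l, closedWalkLengths E v) : HasWalk E (l.length - 1 + n) i j := by
  induction l generalizing i n with
  | nil => exact absurd h.1 (by simp)
  | cons x t ih =>
    obtain rfl : x = i := Option.some_injective _ h.1
    simp only [List.mem_cons, iSup_or, iSup_sup_eq, iSup_iSup_eq_left] at hn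
    obtain ⟨a, ha, b, hb, rfl⟩ := AddSubmonoid.mem_sup.1 hn
    have ha' : HasWalk E a x x := ha
    cases t with
    | nil =>
      obtain rfl : x = j := Option.some_injective _ h.2.1
      obtain rfl : b = 0 := by simpa using hb
      simpa using ha'
    | cons y s =>
      obtain ⟨hxy, hyj⟩ := isWalk_append_cons_iff (l₁ := [x]).1 h
      convert ha'.trans (hxy.hasWalk.trans (ih hyj hb)) using 1
      simp only [List.length_append, List.length_cons, List.length_nil]
      omega

-- All large multiples of the gcd of the closed walk lengths are sums of such lengths.
theorem IsWalk.eventually_hasWalk (h : IsWalk E i j l) {η : ℕ}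
    (hη : ∀ d, (∀ v ∈ l, ∀ k, IsCycleIn E (sccOf E v) k → d ∣ k) → d ∣ η) :
    ∀ᶠ n in atTop, n % η = (l.length - 1) % η → HasWalk E n i j := by
  set M : AddSubmonoid ℕ := ⨆ v ∈ l, closedWalkLengths E v
  have hle : ∀ v ∈ l, closedWalkLengths E v ≤ M := fun v hv =>
    le_iSup₂ (f := fun v _ => closedWalkLengths E v) v hv
  have hMη : Nat.setGcd (M : Set ℕ) ∣ η := hη _ fun v hv k hk =>
    (Nat.setGcd_mono (SetLike.coe_subset_coe.2 (hle v hv))).trans (setGcd_closedWalkLengths_dvd hk)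
  obtain ⟨N, hN⟩ := Nat.exists_mem_closure_of_ge (M : Set ℕ)
  rw [AddSubmonoid.closure_eq] at hN
  filter_upwards [eventually_ge_atTop (N + (l.length - 1))] with n hn hmod
  have hln : l.length - 1 ≤ n := le_of_add_le_right hn
  have hdvd : η ∣ n - (l.length - 1) := (Nat.modEq_iff_dvd' hln).1 hmod.symm
  rw [← Nat.add_sub_cancel' hln]
  exact h.hasWalk_add_of_mem_iSup (hN _ (Nat.le_sub_of_add_le hn) (hMη.trans hdvd))

end ClosedWalks

section Classes

variable {E : V → V → Prop} {i j : V} {L : List (Set V)} {l : List V} {d η : ℕ}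

/-- `η` is the number `η_{ij}^k` of the class of the condensation path `L`: the gcd of the indices
of imprimitivity of the type-2 components on `L`, which is `0` if there are none. -/
def IsClassIndex (E : V → V → Prop) (L : List (Set V)) (η : ℕ) : Prop :=
  IsGCDSet {m : ℕ | ∃ X ∈ L, IsT2 E X ∧ ImprimIndex E X m} η

/-- The set `π_{ij}^k` of the class of the condensation path `L`: the residues modulo `η` of the
lengths of the paths from `i` to `j` in that class. -/
def pathResidues (E : V → V → Prop) (i j : V) (L : List (Set V)) (η : ℕ) : Set ℕ :=
  {r : ℕ | ∃ l : List V, IsPath E i j l ∧ InClass E L l ∧ (l.length - 1) % η = r}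

theorem IsClassIndex.dvd_iff (h : IsClassIndex E L η) (hL : ∀ X ∈ L, IsSCC E X) :
    d ∣ η ↔ ∀ X ∈ L, ∀ k, IsCycleIn E X k → d ∣ k := by
  refine (IsGCDSet.dvd_iff h).trans ⟨fun hd X hX k hk => ?_, ?_⟩
  · exact (isGCDSet_setGcd _).dvd_iff.1 (hd _ ⟨X, hX, ⟨hL X hX, k, hk⟩, isGCDSet_setGcd _⟩) k hk
  · rintro hd m ⟨X, hX, -, hm⟩
    exact IsGCDSet.dvd_iff hm |>.2 (hd X hX)

theorem IsClassIndex.dvd_iff_of_inClass (h : IsClassIndex E L η) (hw : IsWalk E i j l)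
    (hl : InClass E L l) : d ∣ η ↔ ∀ v ∈ l, ∀ k, IsCycleIn E (sccOf E v) k → d ∣ k := by
  subst hl
  rw [h.dvd_iff hw.isCondPath_collapse.2.2.2.2]
  simp only [hw.mem_collapse_map_sccOf, forall_exists_index, and_imp, forall_apply_eq_imp_iff₂]

theorem length_eq_of_isClassIndex_zero (h : IsClassIndex E L 0) (hw : IsWalk E i j l)
    (hl : InClass E L l) : l.length = L.length := by
  have hacyclic : ∀ v ∈ l, ∀ k, ¬IsCycleIn E (sccOf E v) k := by
    intro v hv k hk
    have hk0 : k = 0 := zero_dvd_iff.1 ((h.dvd_iff_of_inClass hw hl).1 dvd_rfl v hv k hk)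
    obtain ⟨_, _, _, _, hpos, _⟩ := hk
    exact hpos.ne' hk0
  rw [← show collapse _ = L from hl, hw.collapse_map_sccOf_of_forall_not_isCycleIn hacyclic,
    List.length_map]

theorem lt_of_mem_pathResidues {r : ℕ} (hη : η ≠ 0) (hr : r ∈ pathResidues E i j L η) : r < η := by
  obtain ⟨l, -, -, rfl⟩ := hr
  exact Nat.mod_lt _ (Nat.pos_of_ne_zero hη)

theorem length_mod_mem_pathResidues (h : IsClassIndex E L η) (hw : IsWalk E i j l)
    (hl : InClass E L l) : (l.length - 1) % η ∈ pathResidues E i j L η := by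
  obtain ⟨p, hp, hclass, hmod⟩ :=
    hw.exists_isPath_modEq ((h.dvd_iff_of_inClass hw hl).1 dvd_rfl)
  exact ⟨p, hp, hclass.trans hl, hmod⟩

theorem eventually_hasWalk_of_mod_mem_pathResidues (h : IsClassIndex E L η) (hη : η ≠ 0) :
    ∀ᶠ n in atTop, n % η ∈ pathResidues E i j L η → HasWalk E n i j := by
  have hfin : (pathResidues E i j L η).Finite :=
    (Set.finite_Iio η).subset fun _ => lt_of_mem_pathResidues hη
  have hres : ∀ r ∈ pathResidues E i j L η, ∀ᶠ n in atTop, n % η = r → HasWalk E n i j := by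
    rintro _ ⟨l, ⟨hw, -⟩, hl, rfl⟩
    exact hw.eventually_hasWalk fun d => (h.dvd_iff_of_inClass hw hl).2
  filter_upwards [(eventually_all_finite hfin).2 hres] with n hn hr
  exact hn _ hr rfl

variable {ι : Type*} [Finite ι] {P : ι → List (Set V)} {ηs : ι → ℕ}

theorem eventually_hasWalk_iff_exists_mod_mem (hP : ∀ L, IsCondPath E i j L → ∃ k, P k = L)
    (hη : ∀ k, IsClassIndex E (P k) (ηs k)) :
    ∀ᶠ n in atTop, HasWalk E n i j ↔
      ∃ k, ηs k ≠ 0 ∧ n % ηs k ∈ pathResidues E i j (P k) (ηs k) := by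
  have hwalk : ∀ k, ∀ᶠ n in atTop, ηs k ≠ 0 →
      n % ηs k ∈ pathResidues E i j (P k) (ηs k) → HasWalk E n i j := fun k =>
    eventually_imp_distrib_left.2 (eventually_hasWalk_of_mod_mem_pathResidues (hη k))
  have hlong : ∀ k, ∀ᶠ n in atTop, (P k).length ≤ n := fun k => eventually_ge_atTop _
  filter_upwards [eventually_all.2 hwalk, eventually_all.2 hlong] with n hn hlen
  refine ⟨fun ⟨l, hl, hln⟩ => ?_, fun ⟨k, hk, hmem⟩ => hn k hk hmem⟩
  obtain ⟨k, hk⟩ := hP _ hl.isCondPath_collapse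
  have hmem := length_mod_mem_pathResidues (hη k) hl hk.symm
  rw [hln, Nat.add_sub_cancel] at hmem
  refine ⟨k, fun h0 => ?_, hmem⟩
  have hlP : l.length = (P k).length := length_eq_of_isClassIndex_zero (h0 ▸ hη k) hl hk.symm
  have := hlen k
  omega

end Classes

theorem rho_infinite_and_sigmaSet_infinite_iff {E : V → V → Prop} {i j : V} {m : ℕ} {S : Set ℕ}
    (hm : m ≠ 0) (hS : S ⊆ Set.Iio m) (h : ∀ᶠ n in atTop, HasWalk E n i j ↔ n % m ∈ S) :
    (rho E i j).Infinite ∧ (sigmaSet E i j).Infinite ↔ S ≠ ∅ ∧ S ≠ Set.Iio m := by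
  have hrho : (rho E i j).Infinite ↔ ∃ r ∈ S, r < m := infinite_setOf_pos_and_iff hm h
  have hsigma : (sigmaSet E i j).Infinite ↔ ∃ r ∈ Sᶜ, r < m := by
    refine infinite_setOf_pos_and_iff hm ?_
    filter_upwards [h, eventually_gt_atTop 0] with n hn hpos
    exact not_congr ((and_iff_right hpos).trans hn)
  have hne : S ≠ Set.Iio m ↔ ∃ r ∈ Set.Iio m, r ∉ S := by
    rw [← Set.ssubset_iff_of_subset hS, Set.ssubset_iff_subset_ne, and_iff_right hS]
  rw [hrho, hsigma, ← Set.nonempty_iff_ne_empty, hne]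
  exact and_congr (exists_congr fun r => and_iff_left_of_imp fun hr => hS hr)
    (exists_congr fun r => and_comm)

theorem stmt8_general {ι : Type*} [Finite ι] (E : V → V → Prop) (i j : V)
    (Ps : ι → List (Set V)) (hPs : Set.range Ps = {L | IsCondPath E i j L})
    (ηk : ι → ℕ) (hηk : ∀ k, IsClassIndex E (Ps k) (ηk k))
    (πk : ι → Set ℕ) (hπk : ∀ k, ηk k ≠ 0 → πk k = pathResidues E i j (Ps k) (ηk k))
    (ηbar : ℕ) (hηbar : IsLCMSet {m : ℕ | m ≠ 0 ∧ ∃ k, ηk k = m} ηbar)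
    (πbar : Set ℕ)
    (hπbar : πbar = ⋃ k, if ηk k = 0 then (∅ : Set ℕ)
      else {c : ℕ | ∃ a ∈ πk k, ∃ b : ℕ, b ≤ ηbar / ηk k - 1 ∧ c = a + b * ηk k}) :
    ((rho E i j).Infinite ∧ (sigmaSet E i j).Infinite) ↔
      (πbar ≠ ∅ ∧ πbar ≠ Set.Iio ηbar) := by
  have hbar : ηbar ≠ 0 :=
    hηbar.ne_zero ((Set.finite_range ηk).subset fun _ hm => hm.2) fun h => h.1 rfl
  have hdvd : ∀ k, ηk k ≠ 0 → ηk k ∣ ηbar := fun k hk => hηbar.1 _ ⟨hk, k, rfl⟩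
  have hlt : ∀ k, ηk k ≠ 0 → ∀ a ∈ πk k, a < ηk k := fun k hk a ha =>
    lt_of_mem_pathResidues hk (hπk k hk ▸ ha)
  have hmem : ∀ c, c ∈ πbar ↔ c < ηbar ∧ ∃ k, ηk k ≠ 0 ∧ c % ηk k ∈ πk k := fun c =>
    hπbar ▸ mem_iUnion_lift_iff hbar hdvd hlt
  have hwalk : ∀ᶠ n in atTop, HasWalk E n i j ↔ n % ηbar ∈ πbar := by
    filter_upwards [eventually_hasWalk_iff_exists_mod_mem hPs.ge hηk] with n hn
    rw [hn, hmem, and_iff_right (Nat.mod_lt n (Nat.pos_of_ne_zero hbar))]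
    exact exists_congr fun k => and_congr_right fun hk => by
      rw [hπk k hk, Nat.mod_mod_of_dvd n (hdvd k hk)]
  exact rho_infinite_and_sigmaSet_infinite_iff hbar (fun c hc => ((hmem c).1 hc).1) hwalk

theorem stmt8 [Fintype V] (E : V → V → Prop) (i j : V)
    -- `Ps` enumerates (without repetition) all paths in the condensation digraph
    -- from the SCC of `i` to the SCC of `j`
    (K : ℕ) (Ps : Fin K → List (Set V))
    (hPs : ∀ k : Fin K, IsCondPath E i j (Ps k))
    (hPsInj : Function.Injective Ps)
    (hPsSurj : ∀ L : List (Set V), IsCondPath E i j L → ∃ k : Fin K, Ps k = L)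
    -- `ηk k` is the gcd of the indices of imprimitivity of the T2SCCs on `Ps k`
    -- (it is forced to be `0` when there is no T2SCC on `Ps k`)
    (ηk : Fin K → ℕ)
    (hηk : ∀ k : Fin K,
      IsGCDSet {m : ℕ | ∃ X ∈ Ps k, IsT2 E X ∧ ImprimIndex E X m} (ηk k))
    -- `πk k` is the set of residues mod `ηk k` of the lengths of the paths from
    -- `i` to `j` in the class of `Ps k`, with `πk k = ∅` when `ηk k = 0`
    (πk : Fin K → Set ℕ)
    (hπk0 : ∀ k : Fin K, ηk k = 0 → πk k = ∅)
    (hπk : ∀ k : Fin K, ηk k ≠ 0 →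
      πk k = {r : ℕ | ∃ l : List V, IsPath E i j l ∧ InClass E (Ps k) l ∧
        (l.length - 1) % ηk k = r})
    -- `ηbar` is the lcm of the nonzero `ηk k`
    (ηbar : ℕ)
    (hηbar : IsLCMSet {m : ℕ | m ≠ 0 ∧ ∃ k : Fin K, ηk k = m} ηbar)
    -- `πbar` is the union over `k` of `π̃k := {a + b·ηk k | a ∈ πk k, 0 ≤ b ≤ ηbar/ηk k - 1}`
    (πbar : Set ℕ)
    (hπbar : πbar = ⋃ k : Fin K,
      if ηk k = 0 then (∅ : Set ℕ)
      else {c : ℕ | ∃ a ∈ πk k, ∃ b : ℕ, b ≤ ηbar / ηk k - 1 ∧ c = a + b * ηk k}) :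
    -- the pair (i,j) is imprimitive iff `πbar` is a nonempty proper subset of the
    -- complete residue system mod `ηbar`
    ((rho E i j).Infinite ∧ (sigmaSet E i j).Infinite) ↔
      (πbar ≠ ∅ ∧ πbar ≠ Set.Iio ηbar) :=
  stmt8_general E i j Ps (Set.Subset.antisymm (Set.range_subset_iff.2 hPs) hPsSurj) ηk hηk πk hπk
    ηbar hηbar πbar hπbar

end BCNPaper8
end

section
/- Let G be a finite directed graph and let i, i' be vertices in the same strongly connected component of G and j, j' be vertices in the same strongly connected component of G. Then the pairs (i, j) and (i', j') belong to the same controllability category; that is: ρ(i,j) is empty if and only if ρ(i',j') is empty; ρ(i,j) is finite if and only if ρ(i',j') is finite; and σ(i,j) is finite if and only if σ(i',j') is finite. (In the paper's notation: the controllability categorization matrix satisfies C_{j'i'} = C_{ji} whenever i, i' lie in the same SCC X_α and j, j' lie in the same SCC X_β; hence a condensation controllability categorization matrix indexed by SCCs is well defined.) -/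
namespace BCNPaper10

variable {V : Type*}

/-- A walk from `i` to `j` encoded as a nonempty list of visited vertices. -/
def IsWalk (E : V → V → Prop) (i j : V) (l : List V) : Prop :=
  l.head? = some i ∧ l.getLast? = some j ∧ l.Chain' E

/-- There is a walk of length exactly `k` from `i` to `j`. -/
def HasWalk (E : V → V → Prop) (k : ℕ) (i j : V) : Prop :=
  ∃ l : List V, IsWalk E i j l ∧ l.length = k + 1

/-- The set of reachable time steps ρ(i,j). -/
def rho (E : V → V → Prop) (i j : V) : Set ℕ :=
  {k | 0 < k ∧ HasWalk E k i j}

/-- The set of unreachable time steps σ(i,j). -/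
def sigmaSet (E : V → V → Prop) (i j : V) : Set ℕ :=
  {k | 0 < k ∧ k ∉ rho E i j}

/-- `u` and `v` lie in the same strongly connected component. -/
def SameSCC (E : V → V → Prop) (u v : V) : Prop :=
  u = v ∨ ((∃ k : ℕ, 0 < k ∧ HasWalk E k u v) ∧ (∃ k : ℕ, 0 < k ∧ HasWalk E k v u))

/-!
Walks from `i'` to `i` and from `j` to `j'`, of lengths `a` and `b`, extend every walk from `i` to
`j` to a walk from `i'` to `j'`, so translation by `a + b` maps `ρ(i, j)` into `ρ(i', j')`. By
symmetry each of the two sets contains a translate of the other, and a set of natural numbers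
containing a translate of a nonempty, infinite or cofinite set is itself nonempty, infinite or
cofinite.
-/

open Filter

section

variable {E : V → V → Prop} {u v w i i' j j' : V}

theorem IsWalk.append_tail {l₁ l₂ : List V} (h₁ : IsWalk E u v l₁) (h₂ : IsWalk E v w l₂) :
    IsWalk E u w (l₁ ++ l₂.tail) := by
  obtain ⟨head₁, last₁, chain₁⟩ := h₁
  obtain ⟨head₂, last₂, chain₂⟩ := h₂
  obtain ⟨s, rfl⟩ := List.getLast?_eq_some_iff.1 last₁
  obtain ⟨t, rfl⟩ := List.head?_eq_some_iff.1 head₂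
  refine ⟨?_, ?_, List.IsChain.append_overlap chain₁ chain₂ (List.cons_ne_nil v [])⟩
  · rw [List.head?_append, head₁, Option.some_or]
  · rw [List.tail_cons, List.append_assoc, List.singleton_append,
      List.getLast?_append_of_ne_nil s (List.cons_ne_nil v t), last₂]

theorem HasWalk.refl (E : V → V → Prop) (u : V) : HasWalk E 0 u u :=
  ⟨[u], ⟨rfl, rfl, List.isChain_singleton u⟩, rfl⟩

theorem HasWalk.trans {a b : ℕ} (h₁ : HasWalk E a u v) (h₂ : HasWalk E b v w) :
    HasWalk E (a + b) u w := by
  obtain ⟨l₁, walk₁, length₁⟩ := h₁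
  obtain ⟨l₂, walk₂, length₂⟩ := h₂
  refine ⟨l₁ ++ l₂.tail, walk₁.append_tail walk₂, ?_⟩
  rw [List.length_append, List.length_tail, length₁, length₂]
  omega

theorem SameSCC.symm (h : SameSCC E u v) : SameSCC E v u :=
  h.imp Eq.symm And.symm

theorem SameSCC.exists_hasWalk (h : SameSCC E u v) : ∃ k, HasWalk E k u v := by
  obtain rfl | ⟨⟨k, -, hk⟩, -⟩ := h
  · exact ⟨0, HasWalk.refl E u⟩
  · exact ⟨k, hk⟩

theorem mapsTo_add_rho {a b : ℕ} (ha : HasWalk E a i' i) (hb : HasWalk E b j j') :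
    Set.MapsTo (· + (a + b)) (rho E i j) (rho E i' j') := by
  rintro k ⟨hpos, hk⟩
  refine ⟨Nat.add_pos_left hpos (a + b), ?_⟩
  have walk : HasWalk E (a + k + b) i' j' := (ha.trans hk).trans hb
  rwa [Nat.add_comm a k, Nat.add_assoc] at walk

theorem SameSCC.exists_mapsTo_add_rho (hi : SameSCC E i i') (hj : SameSCC E j j') :
    ∃ c, Set.MapsTo (· + c) (rho E i j) (rho E i' j') := by
  obtain ⟨a, ha⟩ := hi.symm.exists_hasWalk
  obtain ⟨b, hb⟩ := hj.exists_hasWalk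
  exact ⟨a + b, mapsTo_add_rho ha hb⟩

theorem sigmaSet_finite_iff_eventually_mem_rho :
    (sigmaSet E i j).Finite ↔ ∀ᶠ k in atTop, k ∈ rho E i j := by
  have sigmaSet_eq : sigmaSet E i j = (rho E i j)ᶜ \ {0} :=
    Set.ext fun k => (and_congr_left' Nat.pos_iff_ne_zero).trans and_comm
  calc (sigmaSet E i j).Finite
    _ ↔ ((rho E i j)ᶜ).Finite := by
      rw [sigmaSet_eq]
      exact ⟨fun h => h.of_sdiff (Set.finite_singleton 0), Set.Finite.sdiff⟩
    _ ↔ ∀ᶠ k in cofinite, k ∈ rho E i j := eventually_cofinite.symm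
    _ ↔ ∀ᶠ k in atTop, k ∈ rho E i j := by rw [Nat.cofinite_eq_atTop]

theorem eventually_mem_of_mapsTo_add {s t : Set ℕ} {c : ℕ} (h : Set.MapsTo (· + c) s t)
    (hs : ∀ᶠ k in atTop, k ∈ s) : ∀ᶠ k in atTop, k ∈ t := by
  rw [← map_add_atTop_eq_nat c, eventually_map]
  exact hs.mono h

end

theorem stmt10_general (E : V → V → Prop) (i i' j j' : V)
    (hi : SameSCC E i i') (hj : SameSCC E j j') :
    (rho E i j = ∅ ↔ rho E i' j' = ∅) ∧
    ((rho E i j).Finite ↔ (rho E i' j').Finite) ∧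
    ((sigmaSet E i j).Finite ↔ (sigmaSet E i' j').Finite) := by
  obtain ⟨c, hc⟩ := hi.exists_mapsTo_add_rho hj
  obtain ⟨d, hd⟩ := hi.symm.exists_mapsTo_add_rho hj.symm
  refine ⟨?_, ?_, ?_⟩
  · exact ⟨fun h => Set.mapsTo_empty_iff.1 (h ▸ hd), fun h => Set.mapsTo_empty_iff.1 (h ▸ hc)⟩
  · exact ⟨.of_injOn hd (add_left_injective d).injOn, .of_injOn hc (add_left_injective c).injOn⟩
  · rw [sigmaSet_finite_iff_eventually_mem_rho, sigmaSet_finite_iff_eventually_mem_rho]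
    exact ⟨eventually_mem_of_mapsTo_add hc, eventually_mem_of_mapsTo_add hd⟩

theorem stmt10 [Fintype V] (E : V → V → Prop) (i i' j j' : V)
    (hi : SameSCC E i i') (hj : SameSCC E j j') :
    (rho E i j = ∅ ↔ rho E i' j' = ∅) ∧
    ((rho E i j).Finite ↔ (rho E i' j').Finite) ∧
    ((sigmaSet E i j).Finite ↔ (sigmaSet E i' j').Finite) :=
  stmt10_general E i i' j j' hi hj

end BCNPaper10
end

section
/- Let G be a finite directed graph and let i, j be vertices lying in the same strongly connected component (i.e., i = j, or there are positive-length walks from i to j and from j to i). Suppose the greatest common divisor of the lengths of all closed walks of positive length through i equals 1. Then the pair (i, j) belongs to the primitive category: ρ(i,j) is infinite and σ(i,j) is finite. -/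
/-!
The lengths of closed walks through `i` form an additive submonoid of `ℕ`, which contains every
sufficiently large multiple of the gcd of its elements. If that gcd is `1`, preceding one fixed walk
from `i` to `j` by closed walks through `i` therefore yields walks from `i` to `j` of every
sufficiently large length.
-/

namespace BCNPaper11

variable {V : Type*}

/-- A walk from `i` to `j` encoded as a nonempty list of visited vertices. -/
def IsWalk (E : V → V → Prop) (i j : V) (l : List V) : Prop :=
  l.head? = some i ∧ l.getLast? = some j ∧ l.Chain' E

/-- There is a walk of length exactly `k` from `i` to `j`. -/
def HasWalk (E : V → V → Prop) (k : ℕ) (i j : V) : Prop :=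
  ∃ l : List V, IsWalk E i j l ∧ l.length = k + 1

/-- The set of reachable time steps ρ(i,j). -/
def rho (E : V → V → Prop) (i j : V) : Set ℕ :=
  {k | 0 < k ∧ HasWalk E k i j}

/-- The set of unreachable time steps σ(i,j). -/
def sigmaSet (E : V → V → Prop) (i j : V) : Set ℕ :=
  {k | 0 < k ∧ k ∉ rho E i j}

/-- `g` is the greatest common divisor of the set `S` of natural numbers. -/
def IsGCDSet (S : Set ℕ) (g : ℕ) : Prop :=
  (∀ s ∈ S, g ∣ s) ∧ ∀ d : ℕ, (∀ s ∈ S, d ∣ s) → d ∣ g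

section Walks

variable {E : V → V → Prop} {i j : V}

variable (E i) in
theorem HasWalk.refl : HasWalk E 0 i i :=
  ⟨[i], ⟨rfl, rfl, List.isChain_singleton i⟩, rfl⟩

theorem HasWalk.trans {a b : ℕ} {k : V} (hij : HasWalk E a i j) (hjk : HasWalk E b j k) :
    HasWalk E (a + b) i k := by
  obtain ⟨l₁, ⟨head₁, last₁, chain₁⟩, length₁⟩ := hij
  obtain ⟨l₂, ⟨head₂, last₂, chain₂⟩, length₂⟩ := hjk
  obtain ⟨p, rfl⟩ := List.getLast?_eq_some_iff.1 last₁
  obtain ⟨q, rfl⟩ := List.head?_eq_some_iff.1 head₂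
  refine ⟨p ++ j :: q, ⟨?_, ?_, List.isChain_split.2 ⟨chain₁, chain₂⟩⟩, ?_⟩
  · simpa only [List.head?_append, List.head?_cons] using head₁
  · rw [List.getLast?_append, last₂, Option.some_or]
  · simp only [List.length_append, List.length_cons, List.length_nil] at length₁ length₂ ⊢
    omega

variable (E i) in
/-- The additive submonoid of `ℕ` formed by the lengths of closed walks through `i`; its gcd is
the period of `i`. The walk of length `0` is included, which does not change the gcd. -/
def closedWalkLengths : AddSubmonoid ℕ where
  carrier := {k | HasWalk E k i i}
  zero_mem' := HasWalk.refl E i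
  add_mem' := HasWalk.trans

theorem HasWalk.eventually_hasWalk_add {k : ℕ} (h : HasWalk E k i j) :
    ∀ᶠ m in Filter.atTop,
      Nat.setGcd (closedWalkLengths E i : Set ℕ) ∣ m → HasWalk E (m + k) i j := by
  obtain ⟨N, hN⟩ := Nat.exists_mem_closure_of_ge (closedWalkLengths E i : Set ℕ)
  rw [AddSubmonoid.closure_eq] at hN
  filter_upwards [Filter.eventually_ge_atTop N] with m hm hdvd
  have hclosed : HasWalk E m i i := hN m hm hdvd
  exact hclosed.trans h

theorem setGcd_closedWalkLengths {g : ℕ}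
    (hgcd : IsGCDSet {k : ℕ | 0 < k ∧ HasWalk E k i i} g) :
    Nat.setGcd (closedWalkLengths E i : Set ℕ) = g := by
  refine Nat.dvd_antisymm (hgcd.2 _ fun k hk ↦ Nat.setGcd_dvd_of_mem hk.2)
    (Nat.dvd_setGcd_iff.2 fun k hk ↦ ?_)
  obtain rfl | hpos := k.eq_zero_or_pos
  · exact dvd_zero g
  · exact hgcd.1 k ⟨hpos, hk⟩

theorem eventually_mem_rho (hij : ∃ k, HasWalk E k i j)
    (hgcd : IsGCDSet {k : ℕ | 0 < k ∧ HasWalk E k i i} 1) :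
    ∀ᶠ m in Filter.atTop, m ∈ rho E i j := by
  obtain ⟨k, hk⟩ := hij
  have hadd : ∀ᶠ m in Filter.atTop, HasWalk E (m + k) i j := by
    simpa only [setGcd_closedWalkLengths hgcd, one_dvd, true_imp_iff]
      using hk.eventually_hasWalk_add
  have hwalk : ∀ᶠ m in Filter.atTop, HasWalk E m i j := by
    rwa [← Filter.map_add_atTop_eq_nat k, Filter.eventually_map]
  exact (Filter.eventually_gt_atTop 0).and hwalk

end Walks

theorem stmt11_general (E : V → V → Prop) (i j : V) (hij : ∃ k, HasWalk E k i j)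
    (hgcd : IsGCDSet {k : ℕ | 0 < k ∧ HasWalk E k i i} 1) :
    (rho E i j).Infinite ∧ (sigmaSet E i j).Finite := by
  have hrho : ∀ᶠ m in Filter.atTop, m ∈ rho E i j := eventually_mem_rho hij hgcd
  refine ⟨Nat.frequently_atTop_iff_infinite.1 hrho.frequently, ?_⟩
  rw [← Nat.cofinite_eq_atTop, Filter.eventually_cofinite] at hrho
  exact hrho.subset fun _ hm ↦ hm.2

theorem stmt11 [Fintype V] (E : V → V → Prop) (i j : V)
    (hscc : i = j ∨ ((∃ k : ℕ, 0 < k ∧ HasWalk E k i j) ∧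
      (∃ k : ℕ, 0 < k ∧ HasWalk E k j i)))
    (hgcd : IsGCDSet {k : ℕ | 0 < k ∧ HasWalk E k i i} 1) :
    (rho E i j).Infinite ∧ (sigmaSet E i j).Finite :=
  stmt11_general E i j
    (hscc.elim (fun h ↦ ⟨0, h ▸ HasWalk.refl E i⟩) fun h ↦ h.1.imp fun _ hk ↦ hk.2) hgcd

end BCNPaper11
end

section
/- Let G be a directed graph, let w be a walk of length L from vertex i to vertex j, and let c_1, ..., c_m (m ≥ 1) be closed walks of positive lengths ℓ_1, ..., ℓ_m such that each c_t shares at least one vertex with w. Let g := gcd(ℓ_1, ..., ℓ_m). Then there exists a positive integer n_0 such that for every integer n ≥ n_0 there is a walk from i to j of length exactly L + n·g. -/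
namespace BCNPaper13

variable {V : Type*}

/-- A walk from `i` to `j` encoded as a nonempty list of visited vertices. -/
def IsWalk (E : V → V → Prop) (i j : V) (l : List V) : Prop :=
  l.head? = some i ∧ l.getLast? = some j ∧ l.Chain' E

/-- There is a walk of length exactly `k` from `i` to `j`. -/
def HasWalk (E : V → V → Prop) (k : ℕ) (i j : V) : Prop :=
  ∃ l : List V, IsWalk E i j l ∧ l.length = k + 1

/-!
The lengths of the closed walks based at a vertex `u` form an additive submonoid of `ℕ`, and
rotating a closed walk shows that its length belongs to this submonoid for each of its vertices.
Detours can be inserted independently at the vertices of a walk, so the walk can be lengthened by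
every element of the supremum of the submonoids of its vertices. A submonoid of `ℕ` containing the
`ℓ t` contains all sufficiently large multiples of their gcd.
-/

section Walks

variable {E : V → V → Prop} {i j u v : V} {k n : ℕ} {l : List V}

theorem isWalk_iff :
    IsWalk E i j l ↔ l.head? = some i ∧ l.getLast? = some j ∧ l.IsChain E :=
  Iff.rfl

theorem isWalk_singleton : IsWalk E i j [v] ↔ v = i ∧ v = j := by
  simp [isWalk_iff]

theorem isWalk_cons_cons :
    IsWalk E i j (u :: v :: l) ↔ u = i ∧ E u v ∧ IsWalk E v j (v :: l) := by
  simp only [isWalk_iff, List.head?_cons, Option.some.injEq, List.getLast?_cons_cons,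
    List.isChain_cons_cons]
  tauto

theorem IsWalk.ne_nil (h : IsWalk E i j l) : l ≠ [] := by
  rintro rfl
  simp [isWalk_iff] at h

theorem IsWalk.exists_length_eq (h : IsWalk E i j l) : ∃ k, l.length = k + 1 :=
  Nat.exists_eq_add_one.mpr (List.length_pos_iff.mpr h.ne_nil)

theorem IsWalk.cons (hE : E i v) (h : IsWalk E v j l) : IsWalk E i j (i :: l) := by
  obtain ⟨l, rfl⟩ := List.head?_eq_some_iff.mp h.1
  exact isWalk_cons_cons.mpr ⟨rfl, hE, h⟩

@[elab_as_elim]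
theorem IsWalk.induction {motive : ∀ i l, IsWalk E i j l → Prop}
    (singleton : motive j [j] (isWalk_singleton.mpr ⟨rfl, rfl⟩))
    (cons : ∀ {i v l} (hE : E i v) (h : IsWalk E v j l), motive v l h →
      motive i (i :: l) (h.cons hE))
    (h : IsWalk E i j l) : motive i l h := by
  induction l generalizing i with
  | nil => exact absurd rfl h.ne_nil
  | cons u l ih =>
    cases l with
    | nil =>
      obtain ⟨rfl, rfl⟩ := isWalk_singleton.mp h
      exact singleton
    | cons v l =>
      obtain ⟨rfl, hE, hl⟩ := isWalk_cons_cons.mp h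
      exact cons hE hl (ih hl)

theorem HasWalk.refl (E : V → V → Prop) (i : V) : HasWalk E 0 i i :=
  ⟨[i], isWalk_singleton.mpr ⟨rfl, rfl⟩, rfl⟩

theorem HasWalk.cons (hE : E i v) : HasWalk E k v j → HasWalk E (k + 1) i j
  | ⟨l, hl, hlen⟩ => ⟨i :: l, hl.cons hE, congrArg (· + 1) hlen⟩

theorem HasWalk.trans (h₁ : HasWalk E k i v) (h₂ : HasWalk E n v j) : HasWalk E (k + n) i j := by
  obtain ⟨l, hl, hlen⟩ := h₁
  induction hl using IsWalk.induction generalizing k with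
  | singleton =>
    obtain rfl : k = 0 := by simpa using hlen.symm
    rwa [zero_add]
  | cons hE hl ih =>
    obtain ⟨k, hk⟩ := hl.exists_length_eq
    obtain rfl : k + 1 = _ := by simpa [hk] using hlen
    rw [Nat.add_right_comm]
    exact (ih hk).cons hE

theorem IsWalk.exists_hasWalk_of_mem (h : IsWalk E i j l) (hu : u ∈ l) :
    ∃ a b, l.length = a + b + 1 ∧ HasWalk E a i u ∧ HasWalk E b u j := by
  induction h using IsWalk.induction with
  | singleton =>
    obtain rfl := List.mem_singleton.mp hu
    exact ⟨0, 0, rfl, .refl E u, .refl E u⟩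
  | @cons i v l hE hl ih =>
    rcases List.mem_cons.mp hu with rfl | hu
    · exact ⟨0, l.length, by simp, .refl E u, u :: l, hl.cons hE, rfl⟩
    · obtain ⟨a, b, hab, ha, hb⟩ := ih hu
      exact ⟨a + 1, b, by rw [List.length_cons, hab, Nat.add_right_comm a], ha.cons hE, hb⟩

end Walks

section ClosedWalks

variable {E : V → V → Prop} {i j u v : V} {k n : ℕ} {l : List V}

/-- The lengths of the closed walks based at `u`. They are bundled as an additive submonoid of `ℕ`
because closed walks with a common base point can be concatenated. -/
def closedWalkLengths (E : V → V → Prop) (u : V) : AddSubmonoid ℕ where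
  carrier := {k | HasWalk E k u u}
  zero_mem' := .refl E u
  add_mem' := .trans

theorem mem_closedWalkLengths : k ∈ closedWalkLengths E u ↔ HasWalk E k u u :=
  Iff.rfl

theorem IsWalk.length_mem_closedWalkLengths (h : IsWalk E v v l) (hlen : l.length = k + 1)
    (hu : u ∈ l) : k ∈ closedWalkLengths E u := by
  obtain ⟨a, b, hab, ha, hb⟩ := h.exists_hasWalk_of_mem hu
  obtain rfl : k = b + a := by omega
  exact hb.trans ha

theorem IsWalk.hasWalk_add_of_mem_iSup (h : IsWalk E i j l) (hlen : l.length = k + 1)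
    (hn : n ∈ ⨆ u ∈ l, closedWalkLengths E u) : HasWalk E (k + n) i j := by
  induction h using IsWalk.induction generalizing k n with
  | singleton =>
    obtain rfl : k = 0 := by simpa using hlen.symm
    rw [zero_add]
    simpa only [List.mem_singleton, iSup_iSup_eq_left, mem_closedWalkLengths] using hn
  | @cons i v l hE hl ih =>
    obtain ⟨k, hk⟩ := hl.exists_length_eq
    obtain rfl : k + 1 = _ := by simpa [hk] using hlen
    simp only [List.mem_cons, iSup_or, iSup_sup_eq, iSup_iSup_eq_left] at hn
    obtain ⟨a, ha, b, hb, rfl⟩ := AddSubmonoid.mem_sup.mp hn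
    rw [show k + 1 + (a + b) = a + (k + b + 1) by ring]
    exact (mem_closedWalkLengths.mp ha).trans ((ih hk hb).cons hE)

end ClosedWalks

theorem setGcd_range {ι : Type*} [Fintype ι] (f : ι → ℕ) :
    Nat.setGcd (Set.range f) = Finset.univ.gcd f :=
  Nat.dvd_antisymm
    (Finset.dvd_gcd fun t _ => Nat.setGcd_dvd_of_mem (Set.mem_range_self t))
    (Nat.dvd_setGcd_iff.mpr <| Set.forall_mem_range.mpr fun t =>
      Finset.gcd_dvd (Finset.mem_univ t))

theorem exists_forall_ge_mul_setGcd_mem_closure (s : Set ℕ) :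
    ∃ N, ∀ n ≥ N, n * Nat.setGcd s ∈ AddSubmonoid.closure s := by
  obtain ⟨N, hN⟩ := Nat.exists_mem_closure_of_ge s
  refine ⟨N, fun n hn => ?_⟩
  rcases (Nat.setGcd s).eq_zero_or_pos with h | h
  · rw [h, mul_zero]
    exact zero_mem _
  · exact hN _ (hn.trans (Nat.le_mul_of_pos_right n h)) (dvd_mul_left _ n)

theorem stmt13_general {E : V → V → Prop} {i j : V} {L : ℕ}
    {w : List V} (hw : IsWalk E i j w) (hwlen : w.length = L + 1)
    {ι : Type*} {c : ι → List V} {ℓ : ι → ℕ}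
    (hc : ∀ t, ∃ v, IsWalk E v v (c t)) (hclen : ∀ t, (c t).length = ℓ t + 1)
    (hshare : ∀ t, ∃ u, u ∈ c t ∧ u ∈ w) :
    ∃ n₀, 0 < n₀ ∧ ∀ n, n₀ ≤ n → HasWalk E (L + n * Nat.setGcd (Set.range ℓ)) i j := by
  have hclosure : AddSubmonoid.closure (Set.range ℓ) ≤ ⨆ u ∈ w, closedWalkLengths E u := by
    rw [AddSubmonoid.closure_le, Set.range_subset_iff]
    intro t
    obtain ⟨v, hv⟩ := hc t
    obtain ⟨u, huc, huw⟩ := hshare t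
    exact le_iSup₂ (f := fun u (_ : u ∈ w) => closedWalkLengths E u) u huw
      (hv.length_mem_closedWalkLengths (hclen t) huc)
  obtain ⟨N, hN⟩ := exists_forall_ge_mul_setGcd_mem_closure (Set.range ℓ)
  exact ⟨N + 1, N.succ_pos, fun n hn =>
    hw.hasWalk_add_of_mem_iSup hwlen (hclosure (hN n (Nat.le_of_succ_le hn)))⟩

theorem stmt13 (E : V → V → Prop) (i j : V) (L : ℕ)
    (w : List V) (hw : IsWalk E i j w) (hwlen : w.length = L + 1)
    (m : ℕ) (hm : 1 ≤ m)
    (c : Fin m → List V) (ℓ : Fin m → ℕ)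
    -- each `c t` is a closed walk of positive length `ℓ t`
    (hc : ∀ t : Fin m, ∃ v : V, IsWalk E v v (c t))
    (hclen : ∀ t : Fin m, (c t).length = ℓ t + 1)
    (hcpos : ∀ t : Fin m, 0 < ℓ t)
    -- each `c t` shares at least one vertex with `w`
    (hshare : ∀ t : Fin m, ∃ u : V, u ∈ c t ∧ u ∈ w)
    (g : ℕ) (hg : g = Finset.univ.gcd ℓ) :
    ∃ n₀ : ℕ, 0 < n₀ ∧ ∀ n : ℕ, n₀ ≤ n → HasWalk E (L + n * g) i j := by
  rw [hg, ← setGcd_range]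
  exact stmt13_general hw hwlen hc hclen hshare

end BCNPaper13
end

section
/- Let G be a finite directed graph and let i, j be vertices. Then the set of reachable time steps ρ(i,j) is eventually periodic: there exist a positive integer d and a positive integer T such that for every integer n ≥ T, n ∈ ρ(i,j) if and only if n + d ∈ ρ(i,j). Consequently, exactly one of the following holds: ρ(i,j) is finite (possibly empty), σ(i,j) is finite, or both ρ(i,j) and σ(i,j) are infinite with ρ(i,j) eventually a union of arithmetic progressions of common difference d. -/
namespace BCNPaper15

variable {V : Type*}

/-- A walk from `i` to `j` encoded as a nonempty list of visited vertices. -/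
def IsWalk (E : V → V → Prop) (i j : V) (l : List V) : Prop :=
  l.head? = some i ∧ l.getLast? = some j ∧ l.Chain' E

/-- There is a walk of length exactly `k` from `i` to `j`. -/
def HasWalk (E : V → V → Prop) (k : ℕ) (i j : V) : Prop :=
  ∃ l : List V, IsWalk E i j l ∧ l.length = k + 1

/-- The set of reachable time steps ρ(i,j). -/
def rho (E : V → V → Prop) (i j : V) : Set ℕ :=
  {k | 0 < k ∧ HasWalk E k i j}

/-- The set of unreachable time steps σ(i,j). -/
def sigmaSet (E : V → V → Prop) (i j : V) : Set ℕ :=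
  {k | 0 < k ∧ k ∉ rho E i j}

/-!
Prepending an edge to a walk composes relations, so `HasWalk E k` is the `k`-th iterate of
`Relation.Comp E` at the equality relation. A finite vertex type carries only finitely many
relations, so by the pigeonhole principle this orbit is eventually periodic, with one period and one
threshold that serve all pairs of vertices. The times `ρ(i,j)` and `σ(i,j)` together exhaust the
positive integers, hence cannot both be finite.
-/

open Filter Function

section Iterate

variable {α : Type*} [Finite α]

theorem exists_iterate_mem_periodicPts (f : α → α) (x : α) : ∃ m : ℕ, f^[m] x ∈ periodicPts f := by
  obtain ⟨a, b, hab, heq⟩ : ∃ a b : ℕ, a < b ∧ f^[a] x = f^[b] x :=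
    Set.finite_univ.exists_lt_map_eq_of_forall_mem fun _ => Set.mem_univ _
  have hperiod : IsPeriodicPt f (b - a) (f^[a] x) := by
    rw [IsPeriodicPt, IsFixedPt, ← iterate_add_apply, Nat.sub_add_cancel hab.le, heq]
  exact ⟨a, mk_mem_periodicPts (Nat.sub_pos_of_lt hab) hperiod⟩

theorem exists_eventually_isPeriodicPt_iterate (f : α → α) (x : α) :
    ∃ d : ℕ, 0 < d ∧ ∀ᶠ n in atTop, IsPeriodicPt f d (f^[n] x) := by
  obtain ⟨m, d, hd, hperiod⟩ := exists_iterate_mem_periodicPts f x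
  refine ⟨d, hd, ?_⟩
  filter_upwards [eventually_ge_atTop m] with n hn
  rw [← Nat.sub_add_cancel hn, iterate_add_apply]
  exact hperiod.apply_iterate (n - m)

end Iterate

variable {E : V → V → Prop} {i j u v : V} {l : List V}

theorem isWalk_iff :
    IsWalk E i j l ↔ l.head? = some i ∧ l.getLast? = some j ∧ l.IsChain E :=
  Iff.rfl

theorem isWalk_singleton : IsWalk E i j [v] ↔ v = i ∧ v = j := by
  simp [isWalk_iff]

theorem isWalk_cons_cons :
    IsWalk E i j (u :: v :: l) ↔ u = i ∧ E u v ∧ IsWalk E v j (v :: l) := by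
  simp only [isWalk_iff, List.head?_cons, Option.some.injEq, List.getLast?_cons_cons,
    List.isChain_cons_cons, true_and]
  tauto

theorem IsWalk.exists_eq_cons (h : IsWalk E i j l) : ∃ t, l = i :: t :=
  List.head?_eq_some_iff.mp h.1

theorem hasWalk_zero (E : V → V → Prop) : HasWalk E 0 = Eq := by
  ext i j
  constructor
  · rintro ⟨l, hl, hlen⟩
    obtain ⟨v, rfl⟩ := List.length_eq_one_iff.mp hlen
    obtain ⟨rfl, rfl⟩ := isWalk_singleton.mp hl
    rfl
  · rintro rfl
    exact ⟨[i], isWalk_singleton.mpr ⟨rfl, rfl⟩, rfl⟩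

theorem hasWalk_succ (E : V → V → Prop) (k : ℕ) :
    HasWalk E (k + 1) = Relation.Comp E (HasWalk E k) := by
  ext i j
  constructor
  · rintro ⟨_ | ⟨u, _ | ⟨v, l⟩⟩, hl, hlen⟩
    · simp at hlen
    · simp at hlen
    · obtain ⟨rfl, huv, hl⟩ := isWalk_cons_cons.mp hl
      exact ⟨v, huv, v :: l, hl, Nat.succ.inj hlen⟩
  · rintro ⟨v, hiv, l, hl, hlen⟩
    obtain ⟨t, rfl⟩ := hl.exists_eq_cons
    exact ⟨i :: v :: t, isWalk_cons_cons.mpr ⟨rfl, hiv, hl⟩, congrArg Nat.succ hlen⟩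

theorem hasWalk_eq_iterate_comp (E : V → V → Prop) (k : ℕ) :
    HasWalk E k = (Relation.Comp E)^[k] Eq := by
  induction k with
  | zero => exact hasWalk_zero E
  | succ k ih => rw [hasWalk_succ, ih, iterate_succ_apply']

theorem exists_eventually_hasWalk_add_eq [Finite V] (E : V → V → Prop) :
    ∃ d : ℕ, 0 < d ∧ ∀ᶠ n in atTop, HasWalk E (n + d) = HasWalk E n := by
  obtain ⟨d, hd, hperiod⟩ := exists_eventually_isPeriodicPt_iterate (Relation.Comp E) Eq
  refine ⟨d, hd, hperiod.mono fun n hn => ?_⟩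
  rw [hasWalk_eq_iterate_comp, hasWalk_eq_iterate_comp, add_comm, iterate_add_apply]
  exact hn

theorem mem_rho_iff_hasWalk {n : ℕ} (hn : 0 < n) : n ∈ rho E i j ↔ HasWalk E n i j :=
  and_iff_right hn

theorem rho_union_sigmaSet (E : V → V → Prop) (i j : V) :
    rho E i j ∪ sigmaSet E i j = Set.Ioi 0 :=
  have hsub : rho E i j ⊆ Set.Ioi 0 := fun _ hk => hk.1
  Set.union_sdiff_cancel hsub

theorem rho_infinite_or_sigmaSet_infinite (E : V → V → Prop) (i j : V) :
    (rho E i j).Infinite ∨ (sigmaSet E i j).Infinite := by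
  rw [← Set.infinite_union, rho_union_sigmaSet]
  exact Set.Ioi_infinite 0

theorem stmt15 [Fintype V] (E : V → V → Prop) (i j : V) :
    ∃ d T : ℕ, 0 < d ∧ 0 < T ∧
      (∀ n : ℕ, T ≤ n → (n ∈ rho E i j ↔ n + d ∈ rho E i j)) ∧
      (((rho E i j).Finite ∧ (sigmaSet E i j).Infinite) ∨
       ((rho E i j).Infinite ∧ (sigmaSet E i j).Finite) ∨
       ((rho E i j).Infinite ∧ (sigmaSet E i j).Infinite)) := by
  obtain ⟨d, hd, hperiod⟩ := exists_eventually_hasWalk_add_eq E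
  obtain ⟨T, hT⟩ := eventually_atTop.mp (hperiod.and (eventually_gt_atTop 0))
  refine ⟨d, T, hd, (hT T le_rfl).2, fun n hn => ?_, ?_⟩
  · obtain ⟨hwalk, hpos⟩ := hT n hn
    rw [mem_rho_iff_hasWalk hpos, mem_rho_iff_hasWalk (Nat.add_pos_left hpos d), hwalk]
  · have hinf := rho_infinite_or_sigmaSet_infinite E i j
    simp only [← Set.not_infinite]
    tauto

end BCNPaper15
end
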